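/- arXiv:2406.07311 — 5 statements merged into one kernel-verified Lean document; each statement's English description precedes it below -/
import Mathlib

section
/- Let n ≥ 4, let λ be a partition of n having p parts equal to 1, let 1 ≤ i₁ < i₂ < i₃ ≤ n, and let a₄ ∈ {1,…,n} \ {i₁,i₂,i₃}. Then each of the three sets {π ∈ C_λ : π(i₁)=i₁, π(i₂)=i₂, π(i₃)=a₄}, {π ∈ C_λ : π(i₁)=i₁, π(i₂)=a₄, π(i₃)=i₃}, and {π ∈ C_λ : π(i₁)=a₄, π(i₂)=i₂, π(i₃)=i₃} has cardinality m satisfying n(n−1)(n−2)(n−3) · m = p(p−1)(n−p) · |C_λ|. -/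
open Equiv Finset

/-- The conjugacy class of permutations of `Fin n` with cycle type `lam`
(cycle type includes fixed points as parts of size 1, via `Equiv.Perm.partition`). -/
def conjClass (n : ℕ) (lam : n.Partition) : Finset (Equiv.Perm (Fin n)) :=
  Finset.univ.filter fun π => (Equiv.Perm.partition π).parts = lam.parts

/-- Members of the class fixing `S` pointwise. -/
def fixS (n : ℕ) (lam : n.Partition) (S : Finset (Fin n)) : Finset (Equiv.Perm (Fin n)) :=
  (conjClass n lam).filter fun π => ∀ x ∈ S, π x = x

lemma conj_mem {n : ℕ} (lam : n.Partition) (σ π : Equiv.Perm (Fin n)) :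
    σ * π * σ⁻¹ ∈ conjClass n lam ↔ π ∈ conjClass n lam := by
  have h : (σ * π * σ⁻¹).partition = π.partition := by
    rw [← Equiv.Perm.partition_eq_of_isConj]
    exact (isConj_iff.2 ⟨σ, rfl⟩ : IsConj π _).symm
  simp [conjClass, h]

lemma card_conj {n : ℕ} (lam : n.Partition) (σ : Equiv.Perm (Fin n))
    (P Q : Equiv.Perm (Fin n) → Prop) [DecidablePred P] [DecidablePred Q]
    (h : ∀ π, P π ↔ Q (σ * π * σ⁻¹)) :
    ((conjClass n lam).filter P).card = ((conjClass n lam).filter Q).card := by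
  refine Finset.card_equiv (MulAut.conj σ).toEquiv ?_
  intro π
  simp only [Finset.mem_filter]
  have e : (MulAut.conj σ).toEquiv π = σ * π * σ⁻¹ := rfl
  rw [e, conj_mem, h π]

lemma count_fix {n : ℕ} (lam : n.Partition) (π : Equiv.Perm (Fin n)) (hπ : π ∈ conjClass n lam) :
    (Finset.univ.filter fun x => π x = x).card = lam.parts.count 1 := by
  simp only [conjClass, Finset.mem_filter, Finset.mem_univ, true_and] at hπ
  rw [← hπ, Equiv.Perm.parts_partition, Multiset.count_add, Multiset.count_replicate_self,
    Multiset.count_eq_zero_of_notMem, zero_add, ← Finset.card_compl]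
  · congr 1
    ext x
    simp
  · intro h
    have := Equiv.Perm.two_le_of_mem_cycleType h
    omega

lemma step {n : ℕ} (lam : n.Partition) (S : Finset (Fin n)) (u : Fin n) (hu : u ∉ S) :
    ((n : ℤ) - S.card) * ((fixS n lam (insert u S)).card : ℤ)
      = ((lam.parts.count 1 : ℤ) - S.card) * ((fixS n lam S).card : ℤ) := by
  have h1 : ∀ v ∈ Sᶜ, ((fixS n lam S).filter fun π => π v = v).card
      = (fixS n lam (insert u S)).card := by
    intro v hv
    rw [Finset.mem_compl] at hv
    unfold fixS
    rw [Finset.filter_filter]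
    apply card_conj lam (Equiv.swap u v)
    intro π
    have hs : ∀ x ∈ S, Equiv.swap u v x = x := fun x hx =>
      Equiv.swap_apply_of_ne_of_ne (fun h => hu (h ▸ hx)) (fun h => hv (h ▸ hx))
    simp only [Finset.forall_mem_insert, Equiv.Perm.mul_apply, Equiv.swap_inv,
      Equiv.swap_apply_left]
    rw [and_comm]
    refine and_congr ?_ ?_
    · rw [Equiv.swap_apply_eq_iff, Equiv.swap_apply_left]
    · refine forall₂_congr fun x hx => ?_
      rw [Equiv.swap_apply_eq_iff, hs x hx]
  have h2 : ∀ π ∈ fixS n lam S, ((Sᶜ.filter fun v => π v = v).card : ℤ)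
      = (lam.parts.count 1 : ℤ) - S.card := by
    intro π hπ
    obtain ⟨hc, hf⟩ := Finset.mem_filter.1 hπ
    have e : (Finset.univ.filter fun x => π x = x) = S ∪ (Sᶜ.filter fun v => π v = v) := by
      ext x
      by_cases hx : x ∈ S <;> simp [hx, hf]
    have := count_fix lam π hc
    rw [e, Finset.card_union_of_disjoint] at this
    · rw [← this]; push_cast; ring
    · exact Finset.disjoint_left.2 fun x hx h => by simp [hx] at h
  have h3 := Finset.sum_card_bipartiteAbove_eq_sum_card_bipartiteBelow
    (s := fixS n lam S) (t := Sᶜ) (fun π v => π v = v)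
  simp only [Finset.bipartiteAbove, Finset.bipartiteBelow] at h3
  rw [Finset.sum_congr rfl h1, Finset.sum_const, Finset.card_compl, Fintype.card_fin,
    smul_eq_mul] at h3
  have h4 := congrArg (Nat.cast : ℕ → ℤ) h3
  rw [Nat.cast_sum, Finset.sum_congr rfl h2, Finset.sum_const, nsmul_eq_mul, Nat.cast_mul,
    Nat.cast_sub (by simpa using S.card_le_univ)] at h4
  rw [← h4]; ring

lemma step2 {n : ℕ} (lam : n.Partition) (S : Finset (Fin n)) (u a : Fin n) (hu : u ∉ S)
    (ha : a ∉ S) (hau : a ≠ u) :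
    ((n : ℤ) - S.card - 1) * (((fixS n lam S).filter fun π => π u = a).card : ℤ)
      = ((fixS n lam S).card : ℤ) - ((fixS n lam (insert u S)).card : ℤ) := by
  have h0 := Finset.card_eq_sum_card_fiberwise (s := fixS n lam S) (t := Sᶜ)
    (f := fun π => π u) (by
      intro π hπ
      have hf := (Finset.mem_filter.1 hπ).2
      simp only [Finset.coe_compl, Set.mem_compl_iff, Finset.mem_coe]
      intro h
      exact hu (π.injective (hf _ h) ▸ h))
  have huc : u ∈ Sᶜ := by simpa using hu
  rw [← Finset.add_sum_erase _ _ huc] at h0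
  have h1 : ∀ v ∈ Sᶜ.erase u, ((fixS n lam S).filter fun π => π u = v).card
      = ((fixS n lam S).filter fun π => π u = a).card := by
    intro v hv
    rw [Finset.mem_erase, Finset.mem_compl] at hv
    obtain ⟨hvu, hv⟩ := hv
    unfold fixS
    rw [Finset.filter_filter, Finset.filter_filter]
    apply card_conj lam (Equiv.swap a v)
    intro π
    have hs : ∀ x ∈ S, Equiv.swap a v x = x := fun x hx =>
      Equiv.swap_apply_of_ne_of_ne (fun h => ha (h ▸ hx)) (fun h => hv (h ▸ hx))
    have hs' : Equiv.swap a v u = u := Equiv.swap_apply_of_ne_of_ne hau.symm hvu.symm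
    simp only [Equiv.Perm.mul_apply, Equiv.swap_inv]
    refine and_congr ?_ ?_
    · refine forall₂_congr fun x hx => ?_
      rw [Equiv.swap_apply_eq_iff, hs x hx]
    · rw [Equiv.swap_apply_eq_iff, hs', Equiv.swap_apply_left]
  have h2 : ((fixS n lam S).filter fun π => π u = u) = fixS n lam (insert u S) := by
    ext π
    simp only [fixS, Finset.mem_filter, Finset.forall_mem_insert]
    tauto
  rw [Finset.sum_congr rfl h1, Finset.sum_const, Finset.card_erase_of_mem huc,
    Finset.card_compl, Fintype.card_fin, smul_eq_mul, h2] at h0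
  have hc : S.card + 1 ≤ n := by
    have := (insert u S).card_le_univ
    rw [Finset.card_insert_of_notMem hu] at this
    simpa using this
  have h4 := congrArg (Nat.cast : ℕ → ℤ) h0
  rw [Nat.cast_add, Nat.cast_mul, Nat.cast_sub (by omega), Nat.cast_sub (by omega)] at h4
  push_cast at h4
  linarith

lemma main {n : ℕ} (lam : n.Partition) (x y u a : Fin n) (hxy : x ≠ y) (hxu : x ≠ u)
    (hyu : y ≠ u) (hax : a ≠ x) (hay : a ≠ y) (hau : a ≠ u)
    (P : Equiv.Perm (Fin n) → Prop) [DecidablePred P]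
    (hP : ∀ π, P π ↔ (π x = x ∧ π y = y) ∧ π u = a) :
    ((n : ℤ) * ((n : ℤ) - 1) * ((n : ℤ) - 2) * ((n : ℤ) - 3) *
        (((conjClass n lam).filter P).card : ℤ)
      = (lam.parts.count 1 : ℤ) * ((lam.parts.count 1 : ℤ) - 1) *
        ((n : ℤ) - (lam.parts.count 1 : ℤ)) * ((conjClass n lam).card : ℤ)) := by
  have e : (conjClass n lam).filter P = (fixS n lam {x, y}).filter fun π => π u = a := by
    ext π
    simp [fixS, hP, and_assoc]
  have c2 : ({x, y} : Finset (Fin n)).card = 2 := Finset.card_pair hxy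
  have s0 := step lam ∅ y (by simp)
  have s1 := step lam {y} x (by simpa using hxy)
  have s2 := step lam {x, y} u (by simp [hxu.symm, hyu.symm])
  have s3 := step2 lam {x, y} u a (by simp [hxu.symm, hyu.symm]) (by simp [hax, hay]) hau
  have f0 : fixS n lam ∅ = conjClass n lam := by simp [fixS]
  rw [f0] at s0
  rw [c2] at s2 s3
  rw [← e] at s3
  simp only [Finset.card_empty, Finset.card_singleton, insert_empty_eq] at s0 s1
  push_cast at s0 s1 s2 s3
  generalize (lam.parts.count 1 : ℤ) = p at *
  generalize ((fixS n lam {y}).card : ℤ) = F1 at *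
  generalize ((fixS n lam {x, y}).card : ℤ) = F2 at *
  generalize ((fixS n lam (insert u {x, y})).card : ℤ) = F3 at *
  generalize ((conjClass n lam).card : ℤ) = C at *
  linear_combination (n : ℤ) * (n - 1) * (n - 2) * s3 - (n : ℤ) * (n - 1) * s2
    + (n : ℤ) * (n - p) * s1 + (p - 1) * (n - p) * s0

theorem stmt3 (n : ℕ) (hn : 4 ≤ n) (lam : n.Partition)
    (p : ℕ) (hp : p = lam.parts.count 1)
    (i₁ i₂ i₃ : Fin n) (h12 : i₁ < i₂) (h23 : i₂ < i₃)
    (a₄ : Fin n) (ha1 : a₄ ≠ i₁) (ha2 : a₄ ≠ i₂) (ha3 : a₄ ≠ i₃) :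
    ((n : ℤ) * ((n : ℤ) - 1) * ((n : ℤ) - 2) * ((n : ℤ) - 3) *
        (((conjClass n lam).filter fun π => π i₁ = i₁ ∧ π i₂ = i₂ ∧ π i₃ = a₄).card : ℤ)
      = (p : ℤ) * ((p : ℤ) - 1) * ((n : ℤ) - (p : ℤ)) * ((conjClass n lam).card : ℤ)) ∧
    ((n : ℤ) * ((n : ℤ) - 1) * ((n : ℤ) - 2) * ((n : ℤ) - 3) *
        (((conjClass n lam).filter fun π => π i₁ = i₁ ∧ π i₂ = a₄ ∧ π i₃ = i₃).card : ℤ)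
      = (p : ℤ) * ((p : ℤ) - 1) * ((n : ℤ) - (p : ℤ)) * ((conjClass n lam).card : ℤ)) ∧
    ((n : ℤ) * ((n : ℤ) - 1) * ((n : ℤ) - 2) * ((n : ℤ) - 3) *
        (((conjClass n lam).filter fun π => π i₁ = a₄ ∧ π i₂ = i₂ ∧ π i₃ = i₃).card : ℤ)
      = (p : ℤ) * ((p : ℤ) - 1) * ((n : ℤ) - (p : ℤ)) * ((conjClass n lam).card : ℤ)) := by
  subst hp
  have h13 := h12.trans h23
  refine ⟨?_, ?_, ?_⟩
  · exact main lam i₁ i₂ i₃ a₄ h12.ne h13.ne h23.ne ha1 ha2 ha3 _ (fun π => by tauto)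
  · exact main lam i₁ i₃ i₂ a₄ h13.ne h12.ne h23.ne' ha1 ha3 ha2 _ (fun π => by tauto)
  · exact main lam i₂ i₃ i₁ a₄ h23.ne h12.ne' h13.ne' ha2 ha3 ha1 _ (fun π => by tauto)
end

section
/- Let n ≥ 5, let λ be a partition of n having p parts equal to 1 and q parts equal to 2, let 1 ≤ i₁ < i₂ < i₃ ≤ n, and let a₄ ≠ a₅ be elements of {1,…,n} \ {i₁,i₂,i₃}. Then each of the three sets {π ∈ C_λ : π(i₁)=i₁, π(i₂)=a₄, π(i₃)=a₅}, {π ∈ C_λ : π(i₁)=a₄, π(i₂)=i₂, π(i₃)=a₅}, and {π ∈ C_λ : π(i₁)=a₄, π(i₂)=a₅, π(i₃)=i₃} has cardinality m satisfying (as an identity of integers) n(n−1)(n−2)(n−3)(n−4) · m = (p³ + 3p² + 2pq − n(2p² + 3p) + n²p) · |C_λ|. -/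
open Equiv Finset

lemma aux_count_two {n : ℕ} (π : Perm (Fin n)) :
    (π.support.filter fun y => π (π y) = y).card = 2 * π.cycleType.count 2 := by
  have h1 : π.cycleType.count 2 = (π.cycleFactorsFinset.filter fun c => c.support.card = 2).card := by
    rw [Perm.cycleType_def, Multiset.count_map, ← Finset.filter_val, Finset.card_def]
    congr 2
    ext c
    simp [eq_comm]
  rw [h1, Finset.card_eq_sum_card_fiberwise (f := fun y => π.cycleOf y)
    (t := π.cycleFactorsFinset.filter fun c => c.support.card = 2)]
  · rw [Finset.sum_congr rfl (g := fun _ => 2), Finset.sum_const, smul_eq_mul, mul_comm]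
    intro c hc
    rw [Finset.mem_filter] at hc
    obtain ⟨hc, hc2⟩ := hc
    rw [← hc2]
    congr 1
    have hcyc := (Perm.mem_cycleFactorsFinset_iff.mp hc)
    ext y
    simp only [Finset.mem_filter]
    constructor
    · rintro ⟨⟨h1, h2⟩, rfl⟩
      rw [Perm.mem_support_cycleOf_iff]
      exact ⟨Perm.SameCycle.refl _ _, h1⟩
    · intro hy
      have hsub := Perm.mem_cycleFactorsFinset_support_le hc hy
      have hcy := Perm.cycle_is_cycleOf hy hc
      refine ⟨⟨hsub, ?_⟩, hcy.symm⟩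
      have hy2 : c (c y) = y := by
        have := hcyc.1.orderOf
        rw [hc2] at this
        have h3 := pow_orderOf_eq_one c
        rw [this, pow_two] at h3
        exact congrArg (fun g : Perm (Fin n) => g y) h3
      have e1 := hcyc.2 y hy
      have e2 := hcyc.2 (c y) (Perm.apply_mem_support.mpr hy)
      rw [← e1, ← e2, hy2]
  · intro y hy
    simp only [Finset.coe_filter, Set.mem_ofPred_eq] at hy ⊢
    obtain ⟨hy, hyy⟩ := hy
    have hy' := Perm.mem_support.mp hy
    refine ⟨Perm.cycleOf_mem_cycleFactorsFinset_iff.mpr hy, ?_⟩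
    have hc : (π.cycleOf y).IsCycle := Perm.isCycle_cycleOf π hy'
    rw [← hc.orderOf]
    apply orderOf_eq_prime
    · rw [hc.pow_eq_one_iff]
      refine ⟨y, ?_, ?_⟩
      · rw [Perm.cycleOf_apply_self]; exact hy'
      · rw [Perm.cycleOf_pow_apply_self, pow_two]; exact hyy
    · exact hc.ne_one

lemma aux_pairs {n : ℕ} (π : Perm (Fin n)) :
    (((Finset.univ : Finset (Fin n × Fin n)).filter fun t => π t.1 ≠ t.1 ∧ π t.2 ≠ t.2 ∧ t.1 ≠ t.2 ∧
      π t.1 ≠ t.2 ∧ π t.2 ≠ t.1).card : ℤ) =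
    (π.support.card : ℤ) * (π.support.card - 3) + 2 * π.cycleType.count 2 := by
  rw [Finset.card_eq_sum_card_fiberwise (f := fun t => t.1) (t := π.support)]
  · push_cast
    rw [Finset.sum_congr rfl (g := fun y => ((π.support.card : ℤ) - 3) +
      (if π (π y) = y then 1 else 0))]
    · rw [Finset.sum_add_distrib, Finset.sum_const, nsmul_eq_mul, Finset.sum_boole,
        aux_count_two]
      push_cast; ring
    · intro y hy
      have hy' := Perm.mem_support.mp hy
      have hi : π.symm y ≠ y := by
        intro h; apply hy'; rw [Equiv.symm_apply_eq] at h; exact h.symm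
      have e : (Finset.filter (fun i : Fin n × Fin n => i.1 = y)
          ((Finset.univ : Finset (Fin n × Fin n)).filter fun t => π t.1 ≠ t.1 ∧ π t.2 ≠ t.2 ∧ t.1 ≠ t.2 ∧
            π t.1 ≠ t.2 ∧ π t.2 ≠ t.1)).card = (π.support \ {y, π y, π.symm y}).card := by
        apply Finset.card_bij (fun t _ => t.2)
        · rintro ⟨a, b⟩ h
          simp only [Finset.mem_filter, Finset.mem_univ, true_and] at h
          obtain ⟨⟨h1, h2, h3, h4, h5⟩, rfl⟩ := h
          simp only [Finset.mem_sdiff, Perm.mem_support, Finset.mem_insert, Finset.mem_singleton,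
            not_or, Equiv.eq_symm_apply]
          exact ⟨h2, fun h => h3 h.symm, fun h => h4 h.symm, h5⟩
        · rintro ⟨a, b⟩ h ⟨c, d⟩ h' hh
          simp only [Finset.mem_filter] at h h'
          exact Prod.ext (h.2.trans h'.2.symm) hh
        · intro b hb
          simp only [Finset.mem_sdiff, Perm.mem_support, Finset.mem_insert, Finset.mem_singleton,
            not_or, Equiv.eq_symm_apply] at hb
          refine ⟨(y, b), ?_, rfl⟩
          simp only [Finset.mem_filter, Finset.mem_univ, true_and, and_true]
          exact ⟨hy', hb.1, fun h => hb.2.1 h.symm, fun h => hb.2.2.1 h.symm, hb.2.2.2⟩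
      rw [e]
      have hsub : ({y, π y, π.symm y} : Finset (Fin n)) ⊆ π.support := by
        intro z hz
        simp only [Finset.mem_insert, Finset.mem_singleton] at hz
        rcases hz with rfl | rfl | rfl
        · exact hy
        · exact Perm.apply_mem_support.mpr hy
        · rw [Perm.mem_support, Equiv.apply_symm_apply]; exact hi.symm
      rw [Finset.cast_card_sdiff hsub]
      have hc : (({y, π y, π.symm y} : Finset (Fin n)).card : ℤ) =
          3 - if π (π y) = y then 1 else 0 := by
        split_ifs with h
        · have : π.symm y = π y := by rw [Equiv.symm_apply_eq]; exact h.symm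
          rw [this, Finset.pair_eq_singleton, Finset.card_pair hy'.symm]; norm_num
        · have : π y ≠ π.symm y := by
            intro h'; rw [Equiv.eq_symm_apply] at h'; exact h h'
          rw [Finset.card_eq_three.mpr ⟨_, _, _, hy'.symm, hi.symm, this, rfl⟩]; norm_num
      rw [hc]; ring
  · intro t ht
    simp only [Finset.coe_filter, Set.mem_ofPred_eq] at ht
    exact Finset.mem_coe.mpr (Perm.mem_support.mpr ht.2.1)

lemma aux_tuples {n : ℕ} (π : Perm (Fin n)) :
    (((Finset.univ : Finset (Fin 5 ↪ Fin n)).filter fun f =>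
      π (f 0) = f 0 ∧ π (f 1) = f 3 ∧ π (f 2) = f 4).card : ℤ) =
    ((n : ℤ) - π.support.card) *
      ((π.support.card : ℤ) * (π.support.card - 3) + 2 * π.cycleType.count 2) := by
  have hfix : ((n : ℤ) - π.support.card) = (π.supportᶜ.card : ℤ) := by
    rw [Finset.card_compl, Fintype.card_fin, Nat.cast_sub]
    simpa using Finset.card_le_univ π.support
  rw [hfix, ← aux_pairs, ← Nat.cast_mul, ← Finset.card_product]
  congr 1
  apply Finset.card_bij (fun f _ => (f 0, (f 1, f 2)))
  · intro f hf
    simp only [Finset.mem_filter, Finset.mem_univ, true_and] at hf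
    obtain ⟨h0, h1, h2⟩ := hf
    simp only [Finset.mem_product, Finset.mem_compl, Perm.mem_support, not_not, Finset.mem_filter,
      Finset.mem_univ, true_and, h0, h1, h2, ne_eq, f.injective.eq_iff]
    decide
  · intro f hf g hg h
    simp only [Finset.mem_filter, Finset.mem_univ, true_and] at hf hg
    simp only [Prod.mk.injEq] at h
    obtain ⟨a0, a1, a2⟩ := h
    ext i
    congr 1
    fin_cases i
    · exact a0
    · exact a1
    · exact a2
    · exact hf.2.1.symm.trans ((congrArg π a1).trans hg.2.1)
    · exact hf.2.2.symm.trans ((congrArg π a2).trans hg.2.2)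
  · rintro ⟨x, y, z⟩ h
    simp only [Finset.mem_product, Finset.mem_compl, Perm.mem_support, not_not, Finset.mem_filter,
      Finset.mem_univ, true_and] at h
    obtain ⟨hx, hy, hz, hyz, h4, h5⟩ := h
    have hxy : x ≠ y := by rintro rfl; exact hy hx
    have hxz : x ≠ z := by rintro rfl; exact hz hx
    have hxy' : x ≠ π y := fun h => hxy (π.injective (hx.trans h))
    have hxz' : x ≠ π z := fun h => hxz (π.injective (hx.trans h))
    have hyz' : π y ≠ π z := fun h => hyz (π.injective h)
    refine ⟨⟨![x, y, z, π y, π z], ?_⟩, ?_, rfl⟩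
    · intro i j hij
      fin_cases i <;> fin_cases j <;> simp at hij ⊢ <;> first | exact absurd hij (by assumption) | exact absurd hij.symm (by assumption)
    · simp only [Finset.mem_filter, Finset.mem_univ, true_and]
      exact ⟨hx, rfl, rfl⟩

lemma aux_trans {n : ℕ} (lam : n.Partition) (f g : Fin 5 ↪ Fin n) :
    ((conjClass n lam).filter fun π => π (f 0) = f 0 ∧ π (f 1) = f 3 ∧ π (f 2) = f 4).card =
    ((conjClass n lam).filter fun π => π (g 0) = g 0 ∧ π (g 1) = g 3 ∧ π (g 2) = g 4).card := by
  obtain ⟨σ, hσ⟩ : ∃ σ : Perm (Fin n), ∀ i, σ (f i) = g i := by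
    have := (Equiv.Perm.isMultiplyPretransitive (Fin n) 5).exists_smul_eq f g
    obtain ⟨σ, h⟩ := this
    exact ⟨σ, fun i => by rw [← h]; rfl⟩
  have hσ' : ∀ i, σ.symm (g i) = f i := fun i => by rw [← hσ]; simp
  apply Finset.card_equiv (MulAut.conj σ).toEquiv
  intro π
  have hp : (σ * π * σ⁻¹).partition = π.partition := by
    rw [← Perm.partition_eq_of_isConj]
    exact (isConj_iff.mpr ⟨σ, rfl⟩ : IsConj π _).symm
  have hh : ∀ i j, (σ * π * σ⁻¹) (g i) = g j ↔ π (f i) = f j := by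
    intro i j
    have e : σ⁻¹ (g i) = f i := hσ' i
    rw [Perm.mul_apply, Perm.mul_apply, e, ← hσ j, σ.injective.eq_iff]
  simp only [conjClass, Finset.mem_filter, Finset.mem_univ, true_and, MulEquiv.toEquiv_eq_coe,
    MulEquiv.coe_toEquiv, MulAut.conj_apply, hp, hh]

lemma aux_parts {n : ℕ} (lam : n.Partition) (π : Perm (Fin n)) (h : π ∈ conjClass n lam) :
    (π.support.card : ℤ) = n - lam.parts.count 1 ∧ π.cycleType.count 2 = lam.parts.count 2 := by
  simp only [conjClass, Finset.mem_filter, Finset.mem_univ, true_and] at h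
  have hle : π.support.card ≤ n := by simpa using Finset.card_le_univ π.support
  rw [← h, Perm.parts_partition, Multiset.count_add, Multiset.count_add,
    Multiset.count_replicate, Multiset.count_replicate]
  have h1 : π.cycleType.count 1 = 0 := by
    rw [Multiset.count_eq_zero]
    intro h
    have := Perm.two_le_of_mem_cycleType h
    omega
  rw [h1]
  simp
  omega

lemma aux_main {n : ℕ} (hn : 5 ≤ n) (lam : n.Partition) (x y z a b : Fin n)
    (hf : Function.Injective ![x, y, z, a, b]) :
    ((n : ℤ) * ((n : ℤ) - 1) * ((n : ℤ) - 2) * ((n : ℤ) - 3) * ((n : ℤ) - 4) *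
        (((conjClass n lam).filter fun π => π x = x ∧ π y = a ∧ π z = b).card : ℤ)
      = (((lam.parts.count 1 : ℕ) : ℤ) ^ 3 + 3 * ((lam.parts.count 1 : ℕ) : ℤ) ^ 2
          + 2 * ((lam.parts.count 1 : ℕ) : ℤ) * ((lam.parts.count 2 : ℕ) : ℤ)
          - (n : ℤ) * (2 * ((lam.parts.count 1 : ℕ) : ℤ) ^ 2 + 3 * ((lam.parts.count 1 : ℕ) : ℤ))
          + (n : ℤ) ^ 2 * ((lam.parts.count 1 : ℕ) : ℤ)) *
        ((conjClass n lam).card : ℤ)) := by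
  have hd := Finset.sum_card_bipartiteAbove_eq_sum_card_bipartiteBelow
    (s := (Finset.univ : Finset (Fin 5 ↪ Fin n))) (t := conjClass n lam)
    (fun f π => π (f 0) = f 0 ∧ π (f 1) = f 3 ∧ π (f 2) = f 4)
  simp only [Finset.bipartiteAbove, Finset.bipartiteBelow] at hd
  rw [Finset.sum_congr rfl (fun f _ => aux_trans lam f ⟨_, hf⟩), Finset.sum_const,
    Finset.card_univ, Fintype.card_embedding_eq, Fintype.card_fin, Fintype.card_fin] at hd
  have hd' := congrArg (Nat.cast : ℕ → ℤ) hd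
  rw [Nat.cast_sum, Finset.sum_congr rfl (fun π _ => aux_tuples π)] at hd'
  rw [Finset.sum_congr rfl (fun π hπ => by
    rw [(aux_parts lam π hπ).1, (aux_parts lam π hπ).2]), Finset.sum_const] at hd'
  have hdf : ((n.descFactorial 5 : ℕ) : ℤ) =
      (n : ℤ) * ((n : ℤ) - 1) * ((n : ℤ) - 2) * ((n : ℤ) - 3) * ((n : ℤ) - 4) := by
    obtain ⟨k, rfl⟩ := Nat.exists_eq_add_of_le hn
    simp only [Nat.descFactorial]
    have e1 : 5 + k - 4 = k + 1 := by omega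
    have e2 : 5 + k - 3 = k + 2 := by omega
    have e3 : 5 + k - 2 = k + 3 := by omega
    have e4 : 5 + k - 1 = k + 4 := by omega
    rw [e1, e2, e3, e4, Nat.sub_zero]
    push_cast
    ring
  rw [smul_eq_mul, Nat.cast_mul, hdf] at hd'
  refine Eq.trans hd' ?_
  rw [nsmul_eq_mul]
  ring

theorem stmt4 (n : ℕ) (hn : 5 ≤ n) (lam : n.Partition)
    (p q : ℕ) (hp : p = lam.parts.count 1) (hq : q = lam.parts.count 2)
    (i₁ i₂ i₃ : Fin n) (h12 : i₁ < i₂) (h23 : i₂ < i₃)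
    (a₄ a₅ : Fin n) (ha45 : a₄ ≠ a₅)
    (ha41 : a₄ ≠ i₁) (ha42 : a₄ ≠ i₂) (ha43 : a₄ ≠ i₃)
    (ha51 : a₅ ≠ i₁) (ha52 : a₅ ≠ i₂) (ha53 : a₅ ≠ i₃) :
    ((n : ℤ) * ((n : ℤ) - 1) * ((n : ℤ) - 2) * ((n : ℤ) - 3) * ((n : ℤ) - 4) *
        (((conjClass n lam).filter fun π => π i₁ = i₁ ∧ π i₂ = a₄ ∧ π i₃ = a₅).card : ℤ)
      = ((p : ℤ) ^ 3 + 3 * (p : ℤ) ^ 2 + 2 * (p : ℤ) * (q : ℤ)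
          - (n : ℤ) * (2 * (p : ℤ) ^ 2 + 3 * (p : ℤ)) + (n : ℤ) ^ 2 * (p : ℤ)) *
        ((conjClass n lam).card : ℤ)) ∧
    ((n : ℤ) * ((n : ℤ) - 1) * ((n : ℤ) - 2) * ((n : ℤ) - 3) * ((n : ℤ) - 4) *
        (((conjClass n lam).filter fun π => π i₁ = a₄ ∧ π i₂ = i₂ ∧ π i₃ = a₅).card : ℤ)
      = ((p : ℤ) ^ 3 + 3 * (p : ℤ) ^ 2 + 2 * (p : ℤ) * (q : ℤ)
          - (n : ℤ) * (2 * (p : ℤ) ^ 2 + 3 * (p : ℤ)) + (n : ℤ) ^ 2 * (p : ℤ)) *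
        ((conjClass n lam).card : ℤ)) ∧
    ((n : ℤ) * ((n : ℤ) - 1) * ((n : ℤ) - 2) * ((n : ℤ) - 3) * ((n : ℤ) - 4) *
        (((conjClass n lam).filter fun π => π i₁ = a₄ ∧ π i₂ = a₅ ∧ π i₃ = i₃).card : ℤ)
      = ((p : ℤ) ^ 3 + 3 * (p : ℤ) ^ 2 + 2 * (p : ℤ) * (q : ℤ)
          - (n : ℤ) * (2 * (p : ℤ) ^ 2 + 3 * (p : ℤ)) + (n : ℤ) ^ 2 * (p : ℤ)) *
        ((conjClass n lam).card : ℤ)) := by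
  subst hp hq
  have n12 := h12.ne
  have n23 := h23.ne
  have n13 := (h12.trans h23).ne
  refine ⟨?_, ?_, ?_⟩
  · apply aux_main hn
    intro i j hij
    fin_cases i <;> fin_cases j <;> simp at hij ⊢ <;> first | exact absurd hij (by assumption) | exact absurd hij.symm (by assumption)
  · rw [Finset.filter_congr (q := fun π => π i₂ = i₂ ∧ π i₁ = a₄ ∧ π i₃ = a₅)
      (fun π _ => by tauto)]
    apply aux_main hn
    intro i j hij
    fin_cases i <;> fin_cases j <;> simp at hij ⊢ <;> first | exact absurd hij (by assumption) | exact absurd hij.symm (by assumption)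
  · rw [Finset.filter_congr (q := fun π => π i₃ = i₃ ∧ π i₁ = a₄ ∧ π i₂ = a₅)
      (fun π _ => by tauto)]
    apply aux_main hn
    intro i j hij
    fin_cases i <;> fin_cases j <;> simp at hij ⊢ <;> first | exact absurd hij (by assumption) | exact absurd hij.symm (by assumption)
end

section
/- Let n ≥ 6, let λ be a partition of n having p parts equal to 1, q parts equal to 2, and r parts equal to 3, let 1 ≤ i₁ < i₂ < i₃ ≤ n, and let a₄, a₅, a₆ be pairwise distinct elements of {1,…,n} \ {i₁,i₂,i₃}. Then the set {π ∈ C_λ : π(i₁)=a₄, π(i₂)=a₅, π(i₃)=a₆} has cardinality m satisfying (as an identity of integers) n(n−1)(n−2)(n−3)(n−4)(n−5) · m = (n³ − n²(3p+9) + n(3p² + 18p + 6q + 20) − p³ − 9p² − 20p − 6pq − 24q − 6r) · |C_λ|. -/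
open Equiv Finset

lemma expand {α : Type*} [DecidableEq α] (S : Finset α) (d : α → α → ℤ) (hd : ∀ x y, d x y = d y x)
    (f : α → ℤ) (hf : ∀ x ∈ S, ∑ y ∈ S, d x y = f x) :
    ∑ x ∈ S, ∑ y ∈ S, ∑ z ∈ S, (1 - d x y) * (1 - d y z) * (1 - d x z) =
      (#S : ℤ)^3 - 3 * #S * ∑ x ∈ S, f x + 3 * ∑ x ∈ S, f x ^ 2
      - ∑ x ∈ S, ∑ y ∈ S, ∑ z ∈ S, d x y * d y z * d x z := by
  have e : ∀ x ∈ S, ∑ y ∈ S, ∑ z ∈ S, (1 - d x y) * (1 - d y z) * (1 - d x z) =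
      (#S : ℤ)^2 - 2 * #S * f x - ∑ y ∈ S, f y + f x ^ 2 + 2 * ∑ y ∈ S, d x y * f y
        - ∑ y ∈ S, ∑ z ∈ S, d x y * d y z * d x z := by
    intro x hx
    have h1 : ∀ y ∈ S, ∑ z ∈ S, (1 - d x y) * (1 - d y z) * (1 - d x z) =
       #S - #S * d x y - f y - f x + d x y * f y + d x y * f x + ∑ z ∈ S, d x z * d z y
        - ∑ z ∈ S, d x y * d y z * d x z := by
      intro y hy
      rw [← hf x hx, ← hf y hy]
      simp only [Finset.mul_sum, ← Finset.sum_sub_distrib, ← Finset.sum_add_distrib, Finset.card_eq_sum_ones, Nat.cast_sum, Finset.sum_mul]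
      refine Finset.sum_congr rfl fun z hz => ?_
      rw [hd z y]; push_cast; ring
    rw [Finset.sum_congr rfl h1]
    have h2 : ∑ y ∈ S, ∑ z ∈ S, d x z * d z y = ∑ z ∈ S, d x z * f z := by
      rw [Finset.sum_comm]
      refine Finset.sum_congr rfl fun z hz => ?_
      rw [← Finset.mul_sum, hf z hz]
    simp only [Finset.sum_add_distrib, Finset.sum_sub_distrib, h2, ← Finset.mul_sum, ← Finset.sum_mul, hf x hx]
    simp
    ring
  rw [Finset.sum_congr rfl e]
  have h3 : ∑ x ∈ S, ∑ y ∈ S, d x y * f y = ∑ x ∈ S, f x ^ 2 := by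
    rw [Finset.sum_comm]
    refine Finset.sum_congr rfl fun z hz => ?_
    rw [← Finset.sum_mul, pow_two, ← hf z hz]
    congr 1
    exact Finset.sum_congr rfl fun y _ => hd _ _
  simp only [Finset.sum_add_distrib, Finset.sum_sub_distrib, h3, ← Finset.mul_sum]
  simp
  ring

def DD {n : ℕ} (π : Perm (Fin n)) (x y : Fin n) : Prop := y = x ∨ y = π x ∨ x = π y

instance {n : ℕ} (π : Perm (Fin n)) (x y : Fin n) : Decidable (DD π x y) := by unfold DD; infer_instance

def dd {n : ℕ} (π : Perm (Fin n)) (x y : Fin n) : ℤ := if DD π x y then 1 else 0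

lemma dd_symm {n : ℕ} (π : Perm (Fin n)) (x y : Fin n) : dd π x y = dd π y x := by
  unfold dd DD; congr 1; grind

lemma sum_dd {n : ℕ} (π : Perm (Fin n)) (x : Fin n) (hx : x ∈ π.support) (g : Fin n → ℤ) :
    ∑ y ∈ π.support, dd π x y * g y =
      g x + g (π x) + if π (π x) = x then 0 else g (π⁻¹ x) := by
  have hx' := Perm.mem_support.1 hx
  obtain ⟨w, rfl⟩ := π.surjective x
  have hi := π.injective
  have hne : π w ≠ w := fun h => hx' (by rw [h, h])
  have : ∀ y, dd π (π w) y * g y = if DD π (π w) y then g y else 0 := by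
    intro y; unfold dd; split_ifs <;> simp
  simp only [this, ← Finset.sum_filter]
  have hs : π.support.filter (fun y => DD π (π w) y) =
     if π (π (π w)) = π w then {π w, π (π w)} else {π w, π (π w), w} := by
    ext y
    rw [Finset.mem_filter, Perm.mem_support]
    unfold DD
    have := @hi w y
    have := @hi (π (π w)) w
    split_ifs with h <;> simp only [mem_insert, mem_singleton] <;> grind
  rw [hs]
  split_ifs with h
  · rw [Finset.sum_pair hx'.symm]; simp
  · have : π (π w) ≠ w := fun h' => h (by rw [h'])
    rw [Finset.sum_insert (by simp only [mem_insert, mem_singleton, not_or]; exact ⟨hx'.symm, hne⟩), Finset.sum_pair this]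
    simp; ring

lemma sum_f {n : ℕ} (π : Perm (Fin n)) (x : Fin n) (hx : x ∈ π.support) :
    ∑ y ∈ π.support, dd π x y = 3 - if π (π x) = x then 1 else 0 := by
  have := sum_dd π x hx (fun _ => 1)
  simp only [mul_one] at this
  rw [this]; split_ifs <;> norm_num

lemma sum_t {n : ℕ} (π : Perm (Fin n)) (x : Fin n) (hx : x ∈ π.support) :
    ∑ y ∈ π.support, ∑ z ∈ π.support, dd π x y * dd π y z * dd π x z =
      7 - 3 * (if π (π x) = x then 1 else 0) + 2 * if π (π (π x)) = x then 1 else 0 := by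
  have h1 : ∀ y ∈ π.support, ∑ z ∈ π.support, dd π x y * dd π y z * dd π x z =
     dd π x y * (dd π y x + dd π y (π x) + if π (π x) = x then 0 else dd π y (π⁻¹ x)) := by
    intro y hy
    rw [← sum_dd π x hx (fun z => dd π y z), Finset.mul_sum]
    refine Finset.sum_congr rfl fun z _ => by ring
  rw [Finset.sum_congr rfl h1, sum_dd π x hx]
  have hx' := Perm.mem_support.1 hx
  obtain ⟨w, rfl⟩ := π.surjective x
  have hi := π.injective
  have hne : π w ≠ w := fun h => hx' (by rw [h, h])
  simp only [Equiv.Perm.coe_inv, Equiv.symm_apply_apply, hi.eq_iff]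
  unfold dd DD
  simp only [hi.eq_iff]
  by_cases h : π (π w) = w
  · have : π (π (π w)) ≠ w := by rw [h]; exact hne
    have : w ≠ π w := hne.symm
    simp [h, hne, this]
  · have : w ≠ π w := hne.symm
    have : w ≠ π (π w) := Ne.symm h
    by_cases h3 : π (π (π w)) = w
    · simp [*]
    · have : w ≠ π (π (π w)) := Ne.symm h3
      simp [*]

lemma count_prime {n : ℕ} (π : Perm (Fin n)) (k : ℕ) (hk : k.Prime) :
    #(π.support.filter fun x => (π ^ k) x = x) = k * π.cycleType.count k := by
  have h1 : (π.support.filter fun x => (π ^ k) x = x) =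
     (π.cycleFactorsFinset.filter fun c => #c.support = k).biUnion Perm.support := by
    ext x
    simp only [Finset.mem_filter, Finset.mem_biUnion]
    have key : ∀ hx : x ∈ π.support, ((π ^ k) x = x ↔ #(π.cycleOf x).support = k) := by
      intro hx
      rw [(Perm.isCycleOn_support_cycleOf π x).pow_apply_eq (Perm.mem_support_cycleOf_iff.2 ⟨Perm.SameCycle.refl _ _, hx⟩), Nat.dvd_prime hk]
      have := (Perm.isCycle_cycleOf π (Perm.mem_support.1 hx)).two_le_card_support
      omega
    constructor
    · rintro ⟨hx, h⟩
      exact ⟨π.cycleOf x, ⟨Perm.cycleOf_mem_cycleFactorsFinset_iff.2 hx, (key hx).1 h⟩,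
        Perm.mem_support_cycleOf_iff.2 ⟨Perm.SameCycle.refl _ _, hx⟩⟩
    · rintro ⟨c, ⟨hc, hk'⟩, hx⟩
      have hx' := Perm.mem_cycleFactorsFinset_support_le hc hx
      refine ⟨hx', (key hx').2 ?_⟩
      rw [← Perm.cycle_is_cycleOf hx hc]; exact hk'
  rw [h1, Finset.card_biUnion]
  · rw [Finset.sum_congr rfl (g := fun _ => k) (by simp), Finset.sum_const, Perm.cycleType_def, Multiset.count_map,
      smul_eq_mul, mul_comm]
    congr 1
    rw [Finset.card_def, Finset.filter_val]
    congr 1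
    exact Multiset.filter_congr fun c _ => by simp [eq_comm]
  · intro a ha b hb hab
    have ha := Finset.mem_filter.1 ha
    have hb := Finset.mem_filter.1 hb
    exact Perm.disjoint_iff_disjoint_support.1 (Perm.cycleFactorsFinset_pairwise_disjoint π ha.1 hb.1 hab)

lemma count_triples {n : ℕ} (π : Perm (Fin n)) (M q r : ℤ) (hM : (#π.support : ℤ) = M)
    (hq : (π.cycleType.count 2 : ℤ) = q) (hr : (π.cycleType.count 3 : ℤ) = r) :
    ∑ x ∈ π.support, ∑ y ∈ π.support, ∑ z ∈ π.support,
      (1 - dd π x y) * (1 - dd π y z) * (1 - dd π x z) = M^3 - 9*M^2+20*M+6*q*M-24*q-6*r := by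
  rw [expand _ _ (dd_symm π) _ (sum_f π), Finset.sum_congr rfl (sum_t π)]
  have h2 : ∑ x ∈ π.support, (if π (π x) = x then (1:ℤ) else 0) = 2 * q := by
    have := count_prime π 2 Nat.prime_two
    have this2 : ((#(π.support.filter fun x => (π ^ 2) x = x) : ℕ) : ℤ) = 2 * q := by rw [this, ← hq]; push_cast; ring
    rw [← Finset.sum_filter, ← this2]
    simp [pow_succ]
  have h3 : ∑ x ∈ π.support, (if π (π (π x)) = x then (1:ℤ) else 0) = 3 * r := by
    have := count_prime π 3 Nat.prime_three
    have this2 : ((#(π.support.filter fun x => (π ^ 3) x = x) : ℕ) : ℤ) = 3 * r := by rw [this, ← hr]; push_cast; ring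
    rw [← Finset.sum_filter, ← this2]
    simp [pow_succ]
  have h4 : ∀ x ∈ π.support, ((3 : ℤ) - if π (π x) = x then 1 else 0)^2 = 9 - 5 * if π (π x) = x then 1 else 0 := by
    intro x _; split_ifs <;> norm_num
  rw [Finset.sum_congr rfl h4]
  simp only [Finset.sum_add_distrib, Finset.sum_sub_distrib, ← Finset.mul_sum, h2, h3, Finset.sum_const, nsmul_eq_mul, hM]
  ring

lemma count_emb {n : ℕ} (π : Perm (Fin n)) :
    ((#{t : Fin 6 ↪ Fin n | π (t 0) = t 3 ∧ π (t 1) = t 4 ∧ π (t 2) = t 5} : ℕ) : ℤ) =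
    ∑ x ∈ π.support, ∑ y ∈ π.support, ∑ z ∈ π.support,
      (1 - dd π x y) * (1 - dd π y z) * (1 - dd π x z) := by
  have h : ∀ x y z, (1 - dd π x y) * (1 - dd π y z) * (1 - dd π x z) =
      if ¬ DD π x y ∧ ¬ DD π y z ∧ ¬ DD π x z then 1 else 0 := by
    intro x y z; unfold dd
    by_cases h1 : DD π x y <;> by_cases h2 : DD π y z <;> by_cases h3 : DD π x z <;> simp [h1, h2, h3]
  simp only [h]
  have h' : ∑ x ∈ π.support, ∑ y ∈ π.support, ∑ z ∈ π.support,
      (if ¬ DD π x y ∧ ¬ DD π y z ∧ ¬ DD π x z then (1:ℤ) else 0) =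
      ((#{u ∈ π.support ×ˢ π.support ×ˢ π.support | ¬ DD π u.1 u.2.1 ∧ ¬ DD π u.2.1 u.2.2 ∧ ¬ DD π u.1 u.2.2} : ℕ) : ℤ) := by
    rw [Finset.card_filter, Finset.sum_product]
    simp only [Finset.sum_product]
    push_cast
    rfl
  rw [h']
  congr 1
  refine Finset.card_bij (fun t _ => (t 0, t 1, t 2)) ?_ ?_ ?_
  · intro t ht
    simp only [mem_filter, mem_univ, true_and] at ht
    obtain ⟨h1, h2, h3⟩ := ht
    rw [Finset.mem_filter]
    simp only [mem_product, Perm.mem_support]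
    simp only [DD, h1, h2, h3, t.injective.eq_iff, ne_eq]
    clear h1 h2 h3
    decide
  · intro t ht s hs hts
    simp only [mem_filter, mem_univ, true_and] at ht hs
    simp only [Prod.mk.injEq] at hts
    ext i
    fin_cases i <;> simp <;> grind
  · rintro ⟨x, y, z⟩ hu
    rw [Finset.mem_filter] at hu
    simp only [mem_product, Perm.mem_support] at hu
    simp only [DD] at hu
    have hi := π.injective
    refine ⟨⟨![x, y, z, π x, π y, π z], ?_⟩, ?_, ?_⟩
    · have := @hi x y
      have := @hi y z
      have := @hi x z
      intro i j hij
      fin_cases i <;> fin_cases j <;> simp at hij ⊢ <;> grind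
    · exact Finset.mem_filter.2 ⟨mem_univ _, rfl, rfl, rfl⟩
    · rfl


lemma count_conj {n : ℕ} (lam : n.Partition) (s t : Fin 6 ↪ Fin n) :
    #{π ∈ conjClass n lam | π (s 0) = s 3 ∧ π (s 1) = s 4 ∧ π (s 2) = s 5} =
    #{π ∈ conjClass n lam | π (t 0) = t 3 ∧ π (t 1) = t 4 ∧ π (t 2) = t 5} := by
  obtain ⟨g, hg⟩ := Equiv.Perm.exists_smul_eq_embedding s t
  have hg' : ∀ i, t i = g (s i) := fun i => by rw [← hg]; rfl
  refine Finset.card_bij (fun π _ => g * π * g⁻¹) ?_ ?_ ?_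
  · intro π hπ
    rw [Finset.mem_filter] at hπ ⊢
    obtain ⟨h0, h1, h2, h3⟩ := hπ
    refine ⟨?_, ?_⟩
    · simp only [conjClass, Finset.mem_filter, mem_univ, true_and] at h0 ⊢
      rw [← h0, ← Equiv.Perm.partition_eq_of_isConj.1 (isConj_iff.2 ⟨g, rfl⟩)]
    · simp [hg', h1, h2, h3]
  · intro a _ b _ h
    simpa using h
  · intro π hπ
    rw [Finset.mem_filter] at hπ
    obtain ⟨h0, h1, h2, h3⟩ := hπ
    refine ⟨g⁻¹ * π * g, ?_, by group⟩
    rw [Finset.mem_filter]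
    refine ⟨?_, ?_⟩
    · simp only [conjClass, Finset.mem_filter, mem_univ, true_and] at h0 ⊢
      rw [← h0, ← Equiv.Perm.partition_eq_of_isConj.1 (isConj_iff.2 ⟨g⁻¹, by rw [inv_inv]⟩)]
    · simp only [hg'] at h1 h2 h3
      simp [h1, h2, h3]

lemma class_counts {n : ℕ} (lam : n.Partition) (π : Perm (Fin n)) (h : π ∈ conjClass n lam) :
    #π.support + lam.parts.count 1 = n ∧ π.cycleType.count 2 = lam.parts.count 2 ∧
      π.cycleType.count 3 = lam.parts.count 3 := by
  simp only [conjClass, Finset.mem_filter, mem_univ, true_and] at h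
  rw [← h, Perm.parts_partition]
  have h1 : π.cycleType.count 1 = 0 := by
    rw [Multiset.count_eq_zero]
    intro h
    have := Perm.two_le_of_mem_cycleType h
    omega
  have h2 := π.support.card_le_univ
  simp only [Fintype.card_fin] at h2
  simp [Multiset.count_replicate, h1]
  omega

theorem stmt5 (n : ℕ) (hn : 6 ≤ n) (lam : n.Partition)
    (p q r : ℕ) (hp : p = lam.parts.count 1) (hq : q = lam.parts.count 2)
    (hr : r = lam.parts.count 3)
    (i₁ i₂ i₃ : Fin n) (h12 : i₁ < i₂) (h23 : i₂ < i₃)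
    (a₄ a₅ a₆ : Fin n) (ha45 : a₄ ≠ a₅) (ha46 : a₄ ≠ a₆) (ha56 : a₅ ≠ a₆)
    (ha41 : a₄ ≠ i₁) (ha42 : a₄ ≠ i₂) (ha43 : a₄ ≠ i₃)
    (ha51 : a₅ ≠ i₁) (ha52 : a₅ ≠ i₂) (ha53 : a₅ ≠ i₃)
    (ha61 : a₆ ≠ i₁) (ha62 : a₆ ≠ i₂) (ha63 : a₆ ≠ i₃) :
    (n : ℤ) * ((n : ℤ) - 1) * ((n : ℤ) - 2) * ((n : ℤ) - 3) * ((n : ℤ) - 4) * ((n : ℤ) - 5) *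
        (((conjClass n lam).filter fun π => π i₁ = a₄ ∧ π i₂ = a₅ ∧ π i₃ = a₆).card : ℤ)
      = ((n : ℤ) ^ 3 - (n : ℤ) ^ 2 * (3 * (p : ℤ) + 9)
          + (n : ℤ) * (3 * (p : ℤ) ^ 2 + 18 * (p : ℤ) + 6 * (q : ℤ) + 20)
          - (p : ℤ) ^ 3 - 9 * (p : ℤ) ^ 2 - 20 * (p : ℤ) - 6 * (p : ℤ) * (q : ℤ)
          - 24 * (q : ℤ) - 6 * (r : ℤ)) *
        ((conjClass n lam).card : ℤ) := by
  have hn12 : i₁ ≠ i₂ := h12.ne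
  have hn23 : i₂ ≠ i₃ := h23.ne
  have hn13 : i₁ ≠ i₃ := (h12.trans h23).ne
  let t0 : Fin 6 ↪ Fin n := ⟨![i₁, i₂, i₃, a₄, a₅, a₆], by
    intro i j hij
    fin_cases i <;> fin_cases j <;> simp at hij ⊢ <;> grind⟩
  have hdc : ∑ t : Fin 6 ↪ Fin n,
      #{π ∈ conjClass n lam | π (t 0) = t 3 ∧ π (t 1) = t 4 ∧ π (t 2) = t 5} =
      ∑ π ∈ conjClass n lam,
        #{t : Fin 6 ↪ Fin n | π (t 0) = t 3 ∧ π (t 1) = t 4 ∧ π (t 2) = t 5} := by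
    simp only [Finset.card_filter]
    exact Finset.sum_comm
  rw [Finset.sum_congr rfl (fun t _ => count_conj lam t t0), Finset.sum_const, Finset.card_univ,
    Fintype.card_embedding_eq, Fintype.card_fin, Fintype.card_fin, smul_eq_mul] at hdc
  have hdc' := congrArg (Nat.cast : ℕ → ℤ) hdc
  rw [Nat.cast_sum, Nat.cast_mul] at hdc'
  have hN : ∀ π ∈ conjClass n lam,
      ((#{t : Fin 6 ↪ Fin n | π (t 0) = t 3 ∧ π (t 1) = t 4 ∧ π (t 2) = t 5} : ℕ) : ℤ) =
      ((n : ℤ) - p)^3 - 9*((n : ℤ) - p)^2+20*((n : ℤ) - p)+6*q*((n : ℤ) - p)-24*q-6*r := by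
    intro π hπ
    obtain ⟨c1, c2, c3⟩ := class_counts lam π hπ
    rw [count_emb]
    exact count_triples π _ _ _ (by omega) (by omega) (by omega)
  rw [Finset.sum_congr rfl hN, Finset.sum_const, nsmul_eq_mul] at hdc'
  have hfac : ((n.descFactorial 6 : ℕ) : ℤ) =
      (n : ℤ) * ((n : ℤ) - 1) * ((n : ℤ) - 2) * ((n : ℤ) - 3) * ((n : ℤ) - 4) * ((n : ℤ) - 5) := by
    obtain ⟨m, rfl⟩ := Nat.exists_eq_add_of_le' hn
    simp only [Nat.descFactorial_succ, Nat.descFactorial_zero]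
    have e1 : m + 6 - 5 = m + 1 := by omega
    have e2 : m + 6 - 4 = m + 2 := by omega
    have e3 : m + 6 - 3 = m + 3 := by omega
    have e4 : m + 6 - 2 = m + 4 := by omega
    have e5 : m + 6 - 1 = m + 5 := by omega
    rw [e1, e2, e3, e4, e5]
    push_cast
    ring
  rw [hfac] at hdc'
  have ht0 : #{π ∈ conjClass n lam | π (t0 0) = t0 3 ∧ π (t0 1) = t0 4 ∧ π (t0 2) = t0 5} =
      ((conjClass n lam).filter fun π => π i₁ = a₄ ∧ π i₂ = a₅ ∧ π i₃ = a₆).card := rfl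
  rw [ht0] at hdc'
  rw [hdc']
  ring
end

section
/- Let n ≥ 3 and let λ be a partition of n. Then Σ_{π ∈ C_λ} occ₍₁₋₂₋₃₎(π) = |C_λ| · ( C(n,3)/6 + (n+1)(3n−4)·X₁/60 + (n+1)·X₂/30 + (3n−2)·X₃/30 + X₄/15 ), where occ₍₁₋₂₋₃₎(π) = #{(i,j,k) : 1 ≤ i < j < k ≤ n, π(i) < π(j) < π(k)} is the number of occurrences of the classical pattern 123 in π. -/
open Equiv Finset

def cnt (m : ℕ) (i j k a b c : Fin m) : ℕ :=
  ((Finset.univ : Finset (Equiv.Perm (Fin m))).filter fun τ =>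
    τ i < τ j ∧ τ j < τ k ∧ τ a < τ b ∧ τ b < τ c).card

def UU {n : ℕ} (x y z a b c : Fin n) : ℕ :=
  ((Finset.univ : Finset (Equiv.Perm (Fin n))).filter fun σ =>
    σ x < σ y ∧ σ y < σ z ∧ σ a < σ b ∧ σ b < σ c).card

lemma key_aux {m n : ℕ} (u : Fin m → Fin n) (hu : Function.Injective u) (i j k a b c : Fin m) :
    (∑ τ : Equiv.Perm (Fin m), if (u (τ i) < u (τ j) ∧ u (τ j) < u (τ k) ∧
      u (τ a) < u (τ b) ∧ u (τ b) < u (τ c)) then 1 else 0) = cnt m i j k a b c := by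
  have hs : StrictMono (u ∘ Tuple.sort u) :=
    (Tuple.monotone_sort u).strictMono_of_injective (hu.comp (Tuple.sort u).injective)
  have h : ∀ p q, u p < u q ↔ (Tuple.sort u)⁻¹ p < (Tuple.sort u)⁻¹ q := by
    intro p q
    rw [← hs.lt_iff_lt]
    simp
  unfold cnt
  rw [Finset.card_filter]
  rw [← Equiv.sum_comp (Equiv.mulLeft (Tuple.sort u)⁻¹) (fun τ : Equiv.Perm (Fin m) => if τ i < τ j ∧ τ j < τ k ∧ τ a < τ b ∧ τ b < τ c then 1 else 0)]
  refine Finset.sum_congr rfl fun τ _ => ?_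
  simp only [h, Equiv.coe_mulLeft, Equiv.Perm.mul_apply]
  congr

lemma key {m n : ℕ} (v : Fin m → Fin n) (hv : Function.Injective v) (i j k a b c : Fin m) :
    m.factorial * UU (v i) (v j) (v k) (v a) (v b) (v c) = n.factorial * cnt m i j k a b c := by
  have h1 : ∀ τ : Equiv.Perm (Fin m), UU (v i) (v j) (v k) (v a) (v b) (v c) =
      ∑ σ : Equiv.Perm (Fin n), if (σ (v (τ i)) < σ (v (τ j)) ∧ σ (v (τ j)) < σ (v (τ k)) ∧
      σ (v (τ a)) < σ (v (τ b)) ∧ σ (v (τ b)) < σ (v (τ c))) then 1 else 0 := by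
    intro τ
    unfold UU
    rw [Finset.card_filter]
    rw [← Equiv.sum_comp (Equiv.mulRight (τ.viaEmbedding ⟨v, hv⟩))]
    refine Finset.sum_congr rfl fun σ _ => ?_
    have : ∀ x, τ.viaEmbedding ⟨v, hv⟩ (v x) = v (τ x) :=
      fun x => Equiv.Perm.viaEmbedding_apply τ ⟨v, hv⟩ x
    simp only [Equiv.coe_mulRight, Equiv.Perm.mul_apply, this]
  have h2 := Finset.sum_congr (rfl : (Finset.univ : Finset (Equiv.Perm (Fin m))) = Finset.univ) (fun τ _ => h1 τ)
  rw [Finset.sum_comm] at h2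
  have h3 := fun σ : Equiv.Perm (Fin n) => key_aux (fun x => σ (v x)) (σ.injective.comp hv) i j k a b c
  simp only [h3] at h2
  simpa [Fintype.card_perm] using h2

lemma keyQ {m n : ℕ} (v : Fin m → Fin n) (hv : Function.Injective v) (i j k a b c : Fin m)
    (N : ℕ) (hN : cnt m i j k a b c = N) :
    (UU (v i) (v j) (v k) (v a) (v b) (v c) : ℚ) = n.factorial * (N / m.factorial) := by
  have := key v hv i j k a b c
  rw [hN] at this
  have h : (m.factorial : ℚ) * UU (v i) (v j) (v k) (v a) (v b) (v c) = n.factorial * N := by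
    exact_mod_cast this
  have h0 : (m.factorial : ℚ) ≠ 0 := by positivity
  field_simp
  linarith

section counts
variable {n : ℕ} (π : Equiv.Perm (Fin n))

lemma cycF1 : (∑ x, if π x = x then (1:ℚ) else 0) = π.partition.parts.count 1 := by
  rw [Equiv.Perm.parts_partition, Multiset.count_add, Multiset.count_replicate_self,
    Multiset.count_eq_zero.mpr, zero_add, Finset.sum_boole]
  · congr 1
    have : (univ.filter fun x => π x = x) = π.supportᶜ := by
      ext x; simp
    rw [this, Finset.card_compl]
  · intro h
    exact absurd (Equiv.Perm.two_le_of_mem_cycleType h) (by norm_num)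

lemma count_parts (d : ℕ) (hd : 2 ≤ d) : π.partition.parts.count d = π.cycleType.count d := by
  rw [← Equiv.Perm.filter_parts_partition_eq_cycleType, Multiset.count_filter_of_pos hd]

lemma count_d (d : ℕ) (hd : d.Prime) :
    (univ.filter fun x => (π ^ d) x = x ∧ π x ≠ x).card = d * π.cycleType.count d := by
  have h : (univ.filter fun x => (π ^ d) x = x ∧ π x ≠ x) =
      (π.cycleFactorsFinset.filter fun c => c.support.card = d).biUnion fun c => c.support := by
    ext x
    simp only [mem_filter, mem_univ, true_and, mem_biUnion]
    constructor
    · rintro ⟨h1, h2⟩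
      have hc := Equiv.Perm.isCycle_cycleOf π h2
      refine ⟨π.cycleOf x, ⟨?_, ?_⟩, ?_⟩
      · rw [Equiv.Perm.cycleOf_mem_cycleFactorsFinset_iff]; simpa using h2
      · have h3 : (π.cycleOf x) ^ d = 1 := by
          rw [hc.pow_eq_one_iff]
          refine ⟨x, ?_, ?_⟩
          · simpa using h2
          · simpa using h1
        rw [← hc.orderOf]
        have h4 := orderOf_dvd_of_pow_eq_one h3
        rcases (Nat.dvd_prime hd).mp h4 with h5 | h5
        · rw [orderOf_eq_one_iff] at h5
          exact absurd h5 hc.ne_one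
        · exact h5
      · simpa [Equiv.Perm.mem_support_cycleOf_iff] using h2
    · rintro ⟨c, ⟨hc, hd'⟩, hx⟩
      have h1 := Equiv.Perm.cycle_is_cycleOf hx hc
      have hcy := (Equiv.Perm.mem_cycleFactorsFinset_iff.mp hc).1
      have h2 : c ^ d = 1 := by rw [← hd', ← hcy.orderOf, pow_orderOf_eq_one]
      constructor
      · have h3 : (c ^ d) x = x := by rw [h2]; rfl
        rw [h1] at h3
        simpa using h3
      · have h3 := Equiv.Perm.mem_cycleFactorsFinset_support_le hc hx
        simpa using h3
  rw [h, Finset.card_biUnion]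
  · rw [Finset.sum_congr rfl (g := fun _ => d)]
    · rw [Finset.sum_const, smul_eq_mul, mul_comm, Equiv.Perm.cycleType,
        Multiset.count_map]
      congr 1
      rw [Finset.card_def, Finset.filter_val]
      congr 1
      apply Multiset.filter_congr
      intro c _
      simp [eq_comm]
    · intro c hc; exact (mem_filter.mp hc).2
  · intro a ha b hb hab
    have := Equiv.Perm.cycleFactorsFinset_pairwise_disjoint π
      (mem_filter.mp ha).1 (mem_filter.mp hb).1 hab
    exact Equiv.Perm.disjoint_iff_disjoint_support.mp this

lemma cycFd (d : ℕ) (hd : d.Prime) : (∑ x, if (π ^ d) x = x then (1:ℚ) else 0) =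
    π.partition.parts.count 1 + d * π.partition.parts.count d := by
  rw [count_parts π d hd.two_le, ← cycF1]
  have := count_d π d hd
  have h2 : (d : ℚ) * π.cycleType.count d =
    ∑ x, if (π ^ d) x = x ∧ π x ≠ x then (1:ℚ) else 0 := by
    rw [Finset.sum_boole]; exact_mod_cast this.symm
  rw [h2, ← Finset.sum_add_distrib]
  refine Finset.sum_congr rfl fun x _ => ?_
  by_cases h : π x = x
  · have : (π ^ d) x = x := Equiv.Perm.pow_apply_eq_self_of_apply_eq_self h d
    simp [h, this]
  · simp [h]

lemma cycF2 : (∑ x, if π (π x) = x then (1:ℚ) else 0) =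
    π.partition.parts.count 1 + 2 * π.partition.parts.count 2 := by
  have := cycFd π 2 Nat.prime_two
  simpa [pow_succ] using this

lemma cycF3 : (∑ x, if π (π (π x)) = x then (1:ℚ) else 0) =
    π.partition.parts.count 1 + 3 * π.partition.parts.count 3 := by
  have := cycFd π 3 Nat.prime_three
  simpa [pow_succ] using this
end counts

noncomputable def dist3 {n : ℕ} (x y z : Fin n) : ℚ :=
  if x ≠ y ∧ y ≠ z ∧ x ≠ z then 1 else 0

noncomputable def SS (n : ℕ) : (Fin n → Fin n → Fin n → ℚ) →ₗ[ℚ] ℚ where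
  toFun G := ∑ x, ∑ y, ∑ z, dist3 x y z * G x y z
  map_add' f g := by simp [mul_add, Finset.sum_add_distrib]
  map_smul' c f := by
    simp only [Finset.mul_sum, Pi.smul_apply, smul_eq_mul, RingHom.id_apply]
    refine Finset.sum_congr rfl fun x _ => Finset.sum_congr rfl fun y _ =>
      Finset.sum_congr rfl fun z _ => by ring

section base
variable {n : ℕ}

lemma SS_apply (G : Fin n → Fin n → Fin n → ℚ) :
    SS n G = ∑ x, ∑ y, ∑ z, dist3 x y z * G x y z := rfl

lemma SS_213 (G : Fin n → Fin n → Fin n → ℚ) : SS n (fun x y z => G y x z) = SS n G := by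
  rw [SS_apply, SS_apply, Finset.sum_comm]
  refine Finset.sum_congr rfl fun x _ => Finset.sum_congr rfl fun y _ =>
      Finset.sum_congr rfl fun z _ => ?_
  congr 1
  unfold dist3; grind

lemma SS_132 (G : Fin n → Fin n → Fin n → ℚ) : SS n (fun x y z => G x z y) = SS n G := by
  rw [SS_apply, SS_apply]
  refine Finset.sum_congr rfl fun x _ => ?_
  rw [Finset.sum_comm]
  refine Finset.sum_congr rfl fun y _ =>
      Finset.sum_congr rfl fun z _ => ?_
  congr 1
  unfold dist3; grind

lemma SS_231 (G : Fin n → Fin n → Fin n → ℚ) : SS n (fun x y z => G y z x) = SS n G := by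
  rw [SS_213 (fun x y z => G x z y), SS_132]

lemma SS_312 (G : Fin n → Fin n → Fin n → ℚ) : SS n (fun x y z => G z x y) = SS n G := by
  rw [SS_132 (fun x y z => G y x z), SS_213]

lemma SS_321 (G : Fin n → Fin n → Fin n → ℚ) : SS n (fun x y z => G z y x) = SS n G := by
  rw [SS_213 (fun x y z => G z x y), SS_312]

lemma SS_ie (G : Fin n → Fin n → Fin n → ℚ) : SS n G =
    (∑ x, ∑ y, ∑ z, G x y z) - (∑ x, ∑ y, G x x y) - (∑ x, ∑ y, G x y x) - (∑ x, ∑ y, G x y y)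
      + 2 * ∑ x, G x x x := by
  have h : ∀ x y z : Fin n, dist3 x y z * G x y z = G x y z - (if x = y then G x y z else 0)
      - (if x = z then G x y z else 0) - (if y = z then G x y z else 0)
      + 2 * (if x = y then (if x = z then G x y z else 0) else 0) := by
    intro x y z
    unfold dist3
    by_cases h1 : x = y <;> by_cases h2 : y = z <;> by_cases h3 : x = z <;> simp_all
    ring
  rw [SS_apply]
  simp only [h, Finset.sum_add_distrib, Finset.sum_sub_distrib, ← Finset.mul_sum]
  congr 1
  · congr 1
    · congr 1
      · congr 1
        refine Finset.sum_congr rfl fun x _ => ?_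
        rw [Finset.sum_comm]
        simp
      · simp
    · simp
  · simp

variable (π : Equiv.Perm (Fin n))

noncomputable def EE (x y : Fin n) : ℚ := if π x = y then 1 else 0


lemma EE_self (x : Fin n) : EE π x x * EE π x x = EE π x x := by
  unfold EE; split_ifs <;> simp

lemma sumEl (x : Fin n) : ∑ y, EE π x y = 1 := by simp [EE]

lemma sumElG (x : Fin n) (G : Fin n → ℚ) : ∑ y, EE π x y * G y = G (π x) := by simp [EE]

lemma EE_xx (x y : Fin n) : EE π x x * EE π x y = if x = y then EE π x x else 0 := by
  unfold EE; grind

lemma EE_xx' (x y : Fin n) : EE π x x * EE π y x = if x = y then EE π x x else 0 := by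
  unfold EE; grind [π.injective.eq_iff]

lemma B0 : SS n (fun _ _ _ => 1) = n * (n - 1) * (n - 2) := by
  rw [SS_ie]; simp; ring

lemma B1 {p : ℚ} (h1 : ∑ x, EE π x x = p) :
    SS n (fun x _ _ => EE π x x) = p * (n - 1) * (n - 2) := by
  rw [SS_ie]; simp [h1, ← Finset.mul_sum]; ring

lemma B2 {p : ℚ} (h1 : ∑ x, EE π x x = p) :
    SS n (fun x y _ => EE π x y) = (n - p) * (n - 2) := by
  rw [SS_ie]; simp [h1, ← Finset.mul_sum, sumEl]; ring

lemma B3 {p : ℚ} (h1 : ∑ x, EE π x x = p) :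
    SS n (fun x y _ => EE π x x * EE π y y) = p * (p - 1) * (n - 2) := by
  rw [SS_ie]; simp [h1, ← Finset.mul_sum, ← Finset.sum_mul, EE_self]; ring

lemma B4 {p : ℚ} (h1 : ∑ x, EE π x x = p) :
    SS n (fun x y z => EE π x x * EE π y z) = p * (n - p) := by
  rw [SS_ie]; simp [h1, ← Finset.mul_sum, ← Finset.sum_mul, sumEl, EE_self, EE_xx, EE_xx']; ring

lemma B5 {p q : ℚ} (h1 : ∑ x, EE π x x = p) (h2 : ∑ x, EE π (π x) x = p + 2 * q) :
    SS n (fun x y _ => EE π x y * EE π y x) = 2 * q * (n - 2) := by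
  rw [SS_ie]
  simp [h1, h2, ← Finset.mul_sum, EE_self, sumElG π _ (fun y => EE π y _)]; ring

lemma B6 {p q : ℚ} (h1 : ∑ x, EE π x x = p) (h2 : ∑ x, EE π (π x) x = p + 2 * q) :
    SS n (fun x y z => EE π x y * EE π y z) = n - p - 2 * q := by
  have h : ∀ x y, EE π x y * EE π y y = if y = x then EE π y y else 0 := by
    intro x y; rw [mul_comm, EE_xx']
  rw [SS_ie]
  simp [h1, h2, ← Finset.mul_sum, EE_xx, h, sumEl, sumElG π _ (fun y => EE π y _)]; ring

lemma B7 {p : ℚ} (h1 : ∑ x, EE π x x = p) :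
    SS n (fun x y z => EE π x x * EE π y y * EE π z z) = p * (p - 1) * (p - 2) := by
  have h : ∀ x y, EE π x x * EE π y y * EE π x x = EE π x x * EE π y y := by
    intro x y; rw [mul_right_comm, EE_self]
  rw [SS_ie]
  simp [h1, ← Finset.mul_sum, ← Finset.sum_mul, EE_self, h, mul_assoc]; ring

lemma B8 {p q : ℚ} (h1 : ∑ x, EE π x x = p) (h2 : ∑ x, EE π (π x) x = p + 2 * q) :
    SS n (fun x y z => EE π x x * (EE π y z * EE π z y)) = 2 * p * q := by
  have ha : ∀ x y, EE π x x * (EE π x y * EE π y x) = if x = y then EE π x x else 0 := by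
    intro x y; unfold EE; grind
  have hb : ∀ x y, EE π x x * (EE π y x * EE π x y) = if x = y then EE π x x else 0 := by
    intro x y; unfold EE; grind
  rw [SS_ie]
  simp [h1, h2, ← Finset.mul_sum, ← Finset.sum_mul, ha, hb, EE_self,
    sumElG π _ (fun y => EE π y _)]; ring

lemma B9 {p r : ℚ} (h1 : ∑ x, EE π x x = p) (h3 : ∑ x, EE π (π (π x)) x = p + 3 * r) :
    SS n (fun x y z => EE π x y * (EE π y z * EE π z x)) = 3 * r := by
  have ha : ∀ x y, EE π x x * (EE π x y * EE π y x) = if x = y then EE π x x else 0 := by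
    intro x y; unfold EE; grind
  have hb : ∀ x y, EE π x y * (EE π y x * EE π x x) = if x = y then EE π x x else 0 := by
    intro x y; unfold EE; grind
  have hc : ∀ x y, EE π x y * (EE π y y * EE π y x) = if x = y then EE π x x else 0 := by
    intro x y; unfold EE; grind
  rw [SS_ie]
  simp [h1, ← Finset.mul_sum, ha, hb, hc,
    sumElG π _ (fun y => EE π y _), sumElG π _ (fun y => EE π (π y) _), h3]; ring

end base


section pol
variable {n : ℕ}
variable (π : Equiv.Perm (Fin n))

def pr213 (G : Fin n → Fin n → Fin n → ℚ) : Fin n → Fin n → Fin n → ℚ := fun x y z => G y x z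
def pr132 (G : Fin n → Fin n → Fin n → ℚ) : Fin n → Fin n → Fin n → ℚ := fun x y z => G x z y
def pr231 (G : Fin n → Fin n → Fin n → ℚ) : Fin n → Fin n → Fin n → ℚ := fun x y z => G y z x
def pr312 (G : Fin n → Fin n → Fin n → ℚ) : Fin n → Fin n → Fin n → ℚ := fun x y z => G z x y
def pr321 (G : Fin n → Fin n → Fin n → ℚ) : Fin n → Fin n → Fin n → ℚ := fun x y z => G z y x

noncomputable def m0 (_ : Equiv.Perm (Fin n)) : Fin n → Fin n → Fin n → ℚ := fun _ _ _ => 1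
noncomputable def m1 : Fin n → Fin n → Fin n → ℚ := fun x _ _ => EE π x x
noncomputable def m2 : Fin n → Fin n → Fin n → ℚ := fun x y _ => EE π x y
noncomputable def m3 : Fin n → Fin n → Fin n → ℚ := fun x y _ => EE π x x * EE π y y
noncomputable def m4 : Fin n → Fin n → Fin n → ℚ := fun x y z => EE π x x * EE π y z
noncomputable def m5 : Fin n → Fin n → Fin n → ℚ := fun x y _ => EE π x y * EE π y x
noncomputable def m6 : Fin n → Fin n → Fin n → ℚ := fun x y z => EE π x y * EE π y z
noncomputable def m7 : Fin n → Fin n → Fin n → ℚ := fun x y z => EE π x x * EE π y y * EE π z z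
noncomputable def m8 : Fin n → Fin n → Fin n → ℚ := fun x y z => EE π x x * (EE π y z * EE π z y)
noncomputable def m9 : Fin n → Fin n → Fin n → ℚ := fun x y z => EE π x y * (EE π y z * EE π z x)

noncomputable def Pol : Fin n → Fin n → Fin n → ℚ :=
  (1 / 36 : ℚ) • (m0 π + pr231 (m3 π) + m3 π)
    + (-7 / 360 : ℚ) • (pr312 (m2 π) + pr132 (m2 π))
    + (-1 / 360 : ℚ) • (pr321 (m2 π) + pr213 (m2 π) + pr231 (m2 π) + m2 π)
    + (1 / 45 : ℚ) • (pr312 (m1 π) + m1 π + m7 π + pr213 (m8 π))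
    + (1 / 180 : ℚ) • (pr213 (m1 π))
    + (7 / 360 : ℚ) • (pr321 (m6 π) + m6 π)
    + (-1 / 180 : ℚ) • (pr321 (m4 π) + pr231 (m6 π) + pr132 (m4 π) + m4 π + pr312 (m6 π) + pr312 (m4 π) + pr132 (m6 π) + pr213 (m6 π))
    + (-1 / 72 : ℚ) • (pr231 (m4 π) + pr213 (m4 π))
    + (-1 / 45 : ℚ) • (pr231 (m5 π) + m5 π)
    + (1 / 90 : ℚ) • (pr132 (m3 π) + pr132 (m5 π))
    + (-1 / 90 : ℚ) • (m8 π + pr312 (m8 π) + m9 π + pr213 (m9 π))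

lemma SS_Pol {p q r : ℚ} (h1 : ∑ x, EE π x x = p) (h2 : ∑ x, EE π (π x) x = p + 2 * q)
    (h3 : ∑ x, EE π (π (π x)) x = p + 3 * r) :
    SS n (Pol π) = (n : ℚ) * (n - 1) * (n - 2) / 36
      + ((n : ℚ) + 1) * (3 * (n : ℚ) - 4) * (p - 1) / 60
        + ((n : ℚ) + 1) * ((p - 1) * (p - 2) / 2 + q - 1) / 30
        + (3 * (n : ℚ) - 2) * ((p - 1) * (p - 2) / 2 - q) / 30
        + ((p - 1) * (p - 2) * (p - 3) / 3 - p - r + 2) / 15 := by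
  have e1 : ∀ G, SS n (pr213 G) = SS n G := SS_213
  have e2 : ∀ G, SS n (pr132 G) = SS n G := SS_132
  have e3 : ∀ G, SS n (pr231 G) = SS n G := SS_231
  have e4 : ∀ G, SS n (pr312 G) = SS n G := SS_312
  have e5 : ∀ G, SS n (pr321 G) = SS n G := SS_321
  have b0 : SS n (m0 π) = _ := B0
  have b1 : SS n (m1 π) = _ := B1 π h1
  have b2 : SS n (m2 π) = _ := B2 π h1
  have b3 : SS n (m3 π) = _ := B3 π h1
  have b4 : SS n (m4 π) = _ := B4 π h1
  have b5 : SS n (m5 π) = _ := B5 π h1 h2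
  have b6 : SS n (m6 π) = _ := B6 π h1 h2
  have b7 : SS n (m7 π) = _ := B7 π h1
  have b8 : SS n (m8 π) = _ := B8 π h1 h2
  have b9 : SS n (m9 π) = _ := B9 π h1 h3
  simp only [Pol, map_add, map_smul, e1, e2, e3, e4, e5, b0, b1, b2, b3, b4, b5, b6, b7, b8, b9,
    smul_eq_mul]
  ring

lemma nodup_inj {m : ℕ} (v : Fin m → Fin n) (h : (List.ofFn v).Nodup) : Function.Injective v :=
  List.nodup_ofFn.mp h

lemma UU_Pol (x y z : Fin n) (hxy : x ≠ y) (hyz : y ≠ z) (hxz : x ≠ z) :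
    (UU x y z (π x) (π y) (π z) : ℚ) = n.factorial * Pol π x y z := by
  have hab : π x ≠ π y := fun h => hxy (π.injective h)
  have hbc : π y ≠ π z := fun h => hyz (π.injective h)
  have hac : π x ≠ π z := fun h => hxz (π.injective h)
  have H : ∀ w, π w = x ∨ π w = y ∨ π w = z ∨ (π w ≠ x ∧ π w ≠ y ∧ π w ≠ z) := by
    intro w; tauto
  have fin1 : ∀ (m N : ℕ) (v : Fin m → Fin n) (i j k a b c : Fin m) (Q : ℚ)
      (_ : (List.ofFn v).Nodup) (_ : cnt m i j k a b c = N)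
      (_ : (N / m.factorial : ℚ) = Q),
      (UU (v i) (v j) (v k) (v a) (v b) (v c) : ℚ) = n.factorial * Q := by
    intro m N v i j k a b c Q h1 h2 h3
    rw [← h3]; exact keyQ v (nodup_inj v h1) i j k a b c N h2
  simp only [Pol, pr213, pr132, pr231, pr312, pr321, m0, m1, m2, m3, m4, m5, m6, m7, m8, m9, EE,
    Pi.add_apply, Pi.smul_apply, smul_eq_mul]
  rcases H x with hx | hx | hx | hx
  · rcases H y with hy | hy | hy | hy
    · exact absurd (hx.trans hy.symm) hab
    · rcases H z with hz | hz | hz | hz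
      · exact absurd (hx.trans hz.symm) hac
      · exact absurd (hy.trans hz.symm) hbc
      · rw [hx, hy, hz]; exact fin1 3 1 ![x, y, z] 0 1 2 0 1 2 _ (by simp; grind)
          (by decide +kernel) (by norm_num [Nat.factorial, hx, hy, hz, hxy, hyz, hxz, hxy.symm, hyz.symm, hxz.symm])
      · rw [hx, hy]; exact fin1 4 2 ![x, y, z, π z] 0 1 2 0 1 3 _ (by simp; grind)
          (by decide +kernel) (by norm_num [Nat.factorial, hx, hy, hz, hxy, hyz, hxz, hxy.symm, hyz.symm, hxz.symm])
    · rcases H z with hz | hz | hz | hz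
      · exact absurd (hx.trans hz.symm) hac
      · rw [hx, hy, hz]; exact fin1 3 0 ![x, y, z] 0 1 2 0 2 1 _ (by simp; grind)
          (by decide +kernel) (by norm_num [Nat.factorial, hx, hy, hz, hxy, hyz, hxz, hxy.symm, hyz.symm, hxz.symm])
      · exact absurd (hy.trans hz.symm) hbc
      · rw [hx, hy]; exact fin1 4 1 ![x, y, z, π z] 0 1 2 0 2 3 _ (by simp; grind)
          (by decide +kernel) (by norm_num [Nat.factorial, hx, hy, hz, hxy, hyz, hxz, hxy.symm, hyz.symm, hxz.symm])
    · rcases H z with hz | hz | hz | hz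
      · exact absurd (hx.trans hz.symm) hac
      · rw [hx, hz]; exact fin1 4 1 ![x, y, z, π y] 0 1 2 0 3 1 _ (by simp; grind)
          (by decide +kernel) (by norm_num [Nat.factorial, hx, hy, hz, hxy, hyz, hxz, hxy.symm, hyz.symm, hxz.symm])
      · rw [hx, hz]; exact fin1 4 2 ![x, y, z, π y] 0 1 2 0 3 2 _ (by simp; grind)
          (by decide +kernel) (by norm_num [Nat.factorial, hx, hy, hz, hxy, hyz, hxz, hxy.symm, hyz.symm, hxz.symm])
      · rw [hx]; exact fin1 5 6 ![x, y, z, π y, π z] 0 1 2 0 3 4 _ (by simp; grind)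
          (by decide +kernel) (by norm_num [Nat.factorial, hx, hy, hz, hxy, hyz, hxz, hxy.symm, hyz.symm, hxz.symm])
  · rcases H y with hy | hy | hy | hy
    · rcases H z with hz | hz | hz | hz
      · exact absurd (hy.trans hz.symm) hbc
      · exact absurd (hx.trans hz.symm) hac
      · rw [hx, hy, hz]; exact fin1 3 0 ![x, y, z] 0 1 2 1 0 2 _ (by simp; grind)
          (by decide +kernel) (by norm_num [Nat.factorial, hx, hy, hz, hxy, hyz, hxz, hxy.symm, hyz.symm, hxz.symm])
      · rw [hx, hy]; exact fin1 4 0 ![x, y, z, π z] 0 1 2 1 0 3 _ (by simp; grind)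
          (by decide +kernel) (by norm_num [Nat.factorial, hx, hy, hz, hxy, hyz, hxz, hxy.symm, hyz.symm, hxz.symm])
    · exact absurd (hx.trans hy.symm) hab
    · rcases H z with hz | hz | hz | hz
      · rw [hx, hy, hz]; exact fin1 3 0 ![x, y, z] 0 1 2 1 2 0 _ (by simp; grind)
          (by decide +kernel) (by norm_num [Nat.factorial, hx, hy, hz, hxy, hyz, hxz, hxy.symm, hyz.symm, hxz.symm])
      · exact absurd (hx.trans hz.symm) hac
      · exact absurd (hy.trans hz.symm) hbc
      · rw [hx, hy]; exact fin1 4 1 ![x, y, z, π z] 0 1 2 1 2 3 _ (by simp; grind)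
          (by decide +kernel) (by norm_num [Nat.factorial, hx, hy, hz, hxy, hyz, hxz, hxy.symm, hyz.symm, hxz.symm])
    · rcases H z with hz | hz | hz | hz
      · rw [hx, hz]; exact fin1 4 0 ![x, y, z, π y] 0 1 2 1 3 0 _ (by simp; grind)
          (by decide +kernel) (by norm_num [Nat.factorial, hx, hy, hz, hxy, hyz, hxz, hxy.symm, hyz.symm, hxz.symm])
      · exact absurd (hx.trans hz.symm) hac
      · rw [hx, hz]; exact fin1 4 1 ![x, y, z, π y] 0 1 2 1 3 2 _ (by simp; grind)
          (by decide +kernel) (by norm_num [Nat.factorial, hx, hy, hz, hxy, hyz, hxz, hxy.symm, hyz.symm, hxz.symm])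
      · rw [hx]; exact fin1 5 3 ![x, y, z, π y, π z] 0 1 2 1 3 4 _ (by simp; grind)
          (by decide +kernel) (by norm_num [Nat.factorial, hx, hy, hz, hxy, hyz, hxz, hxy.symm, hyz.symm, hxz.symm])
  · rcases H y with hy | hy | hy | hy
    · rcases H z with hz | hz | hz | hz
      · exact absurd (hy.trans hz.symm) hbc
      · rw [hx, hy, hz]; exact fin1 3 0 ![x, y, z] 0 1 2 2 0 1 _ (by simp; grind)
          (by decide +kernel) (by norm_num [Nat.factorial, hx, hy, hz, hxy, hyz, hxz, hxy.symm, hyz.symm, hxz.symm])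
      · exact absurd (hx.trans hz.symm) hac
      · rw [hx, hy]; exact fin1 4 0 ![x, y, z, π z] 0 1 2 2 0 3 _ (by simp; grind)
          (by decide +kernel) (by norm_num [Nat.factorial, hx, hy, hz, hxy, hyz, hxz, hxy.symm, hyz.symm, hxz.symm])
    · rcases H z with hz | hz | hz | hz
      · rw [hx, hy, hz]; exact fin1 3 0 ![x, y, z] 0 1 2 2 1 0 _ (by simp; grind)
          (by decide +kernel) (by norm_num [Nat.factorial, hx, hy, hz, hxy, hyz, hxz, hxy.symm, hyz.symm, hxz.symm])
      · exact absurd (hy.trans hz.symm) hbc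
      · exact absurd (hx.trans hz.symm) hac
      · rw [hx, hy]; exact fin1 4 0 ![x, y, z, π z] 0 1 2 2 1 3 _ (by simp; grind)
          (by decide +kernel) (by norm_num [Nat.factorial, hx, hy, hz, hxy, hyz, hxz, hxy.symm, hyz.symm, hxz.symm])
    · exact absurd (hx.trans hy.symm) hab
    · rcases H z with hz | hz | hz | hz
      · rw [hx, hz]; exact fin1 4 0 ![x, y, z, π y] 0 1 2 2 3 0 _ (by simp; grind)
          (by decide +kernel) (by norm_num [Nat.factorial, hx, hy, hz, hxy, hyz, hxz, hxy.symm, hyz.symm, hxz.symm])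
      · rw [hx, hz]; exact fin1 4 0 ![x, y, z, π y] 0 1 2 2 3 1 _ (by simp; grind)
          (by decide +kernel) (by norm_num [Nat.factorial, hx, hy, hz, hxy, hyz, hxz, hxy.symm, hyz.symm, hxz.symm])
      · exact absurd (hx.trans hz.symm) hac
      · rw [hx]; exact fin1 5 1 ![x, y, z, π y, π z] 0 1 2 2 3 4 _ (by simp; grind)
          (by decide +kernel) (by norm_num [Nat.factorial, hx, hy, hz, hxy, hyz, hxz, hxy.symm, hyz.symm, hxz.symm])
  · rcases H y with hy | hy | hy | hy
    · rcases H z with hz | hz | hz | hz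
      · exact absurd (hy.trans hz.symm) hbc
      · rw [hy, hz]; exact fin1 4 1 ![x, y, z, π x] 0 1 2 3 0 1 _ (by simp; grind)
          (by decide +kernel) (by norm_num [Nat.factorial, hx, hy, hz, hxy, hyz, hxz, hxy.symm, hyz.symm, hxz.symm])
      · rw [hy, hz]; exact fin1 4 1 ![x, y, z, π x] 0 1 2 3 0 2 _ (by simp; grind)
          (by decide +kernel) (by norm_num [Nat.factorial, hx, hy, hz, hxy, hyz, hxz, hxy.symm, hyz.symm, hxz.symm])
      · rw [hy]; exact fin1 5 3 ![x, y, z, π x, π z] 0 1 2 3 0 4 _ (by simp; grind)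
          (by decide +kernel) (by norm_num [Nat.factorial, hx, hy, hz, hxy, hyz, hxz, hxy.symm, hyz.symm, hxz.symm])
    · rcases H z with hz | hz | hz | hz
      · rw [hy, hz]; exact fin1 4 0 ![x, y, z, π x] 0 1 2 3 1 0 _ (by simp; grind)
          (by decide +kernel) (by norm_num [Nat.factorial, hx, hy, hz, hxy, hyz, hxz, hxy.symm, hyz.symm, hxz.symm])
      · exact absurd (hy.trans hz.symm) hbc
      · rw [hy, hz]; exact fin1 4 2 ![x, y, z, π x] 0 1 2 3 1 2 _ (by simp; grind)
          (by decide +kernel) (by norm_num [Nat.factorial, hx, hy, hz, hxy, hyz, hxz, hxy.symm, hyz.symm, hxz.symm])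
      · rw [hy]; exact fin1 5 4 ![x, y, z, π x, π z] 0 1 2 3 1 4 _ (by simp; grind)
          (by decide +kernel) (by norm_num [Nat.factorial, hx, hy, hz, hxy, hyz, hxz, hxy.symm, hyz.symm, hxz.symm])
    · rcases H z with hz | hz | hz | hz
      · rw [hy, hz]; exact fin1 4 0 ![x, y, z, π x] 0 1 2 3 2 0 _ (by simp; grind)
          (by decide +kernel) (by norm_num [Nat.factorial, hx, hy, hz, hxy, hyz, hxz, hxy.symm, hyz.symm, hxz.symm])
      · rw [hy, hz]; exact fin1 4 0 ![x, y, z, π x] 0 1 2 3 2 1 _ (by simp; grind)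
          (by decide +kernel) (by norm_num [Nat.factorial, hx, hy, hz, hxy, hyz, hxz, hxy.symm, hyz.symm, hxz.symm])
      · exact absurd (hy.trans hz.symm) hbc
      · rw [hy]; exact fin1 5 3 ![x, y, z, π x, π z] 0 1 2 3 2 4 _ (by simp; grind)
          (by decide +kernel) (by norm_num [Nat.factorial, hx, hy, hz, hxy, hyz, hxz, hxy.symm, hyz.symm, hxz.symm])
    · rcases H z with hz | hz | hz | hz
      · rw [hz]; exact fin1 5 1 ![x, y, z, π x, π y] 0 1 2 3 4 0 _ (by simp; grind)
          (by decide +kernel) (by norm_num [Nat.factorial, hx, hy, hz, hxy, hyz, hxz, hxy.symm, hyz.symm, hxz.symm])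
      · rw [hz]; exact fin1 5 3 ![x, y, z, π x, π y] 0 1 2 3 4 1 _ (by simp; grind)
          (by decide +kernel) (by norm_num [Nat.factorial, hx, hy, hz, hxy, hyz, hxz, hxy.symm, hyz.symm, hxz.symm])
      · rw [hz]; exact fin1 5 6 ![x, y, z, π x, π y] 0 1 2 3 4 2 _ (by simp; grind)
          (by decide +kernel) (by norm_num [Nat.factorial, hx, hy, hz, hxy, hyz, hxz, hxy.symm, hyz.symm, hxz.symm])
      · exact fin1 6 20 ![x, y, z, π x, π y, π z] 0 1 2 3 4 5 _ (by simp; grind)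
          (by decide +kernel) (by norm_num [Nat.factorial, hx, hy, hz, hxy, hyz, hxz, hxy.symm, hyz.symm, hxz.symm])

end pol

lemma conj_sum {n : ℕ} (π : Equiv.Perm (Fin n)) :
    (∑ σ : Equiv.Perm (Fin n),
      ((((Finset.univ : Finset (Fin n × Fin n × Fin n)).filter fun x =>
          x.1 < x.2.1 ∧ x.2.1 < x.2.2 ∧ (σ * π * σ⁻¹) x.1 < (σ * π * σ⁻¹) x.2.1 ∧
          (σ * π * σ⁻¹) x.2.1 < (σ * π * σ⁻¹) x.2.2).card : ℚ)))
    = n.factorial * SS n (Pol π) := by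
  have h1 : ∀ σ : Equiv.Perm (Fin n),
      ((((Finset.univ : Finset (Fin n × Fin n × Fin n)).filter fun x =>
          x.1 < x.2.1 ∧ x.2.1 < x.2.2 ∧ (σ * π * σ⁻¹) x.1 < (σ * π * σ⁻¹) x.2.1 ∧
          (σ * π * σ⁻¹) x.2.1 < (σ * π * σ⁻¹) x.2.2).card : ℚ)) =
      ∑ x, ∑ y, ∑ z, if (σ x < σ y ∧ σ y < σ z ∧ σ (π x) < σ (π y) ∧ σ (π y) < σ (π z))
        then (1 : ℚ) else 0 := by
    intro σ
    rw [Finset.card_filter, Fintype.sum_prod_type]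
    simp only [Fintype.sum_prod_type]
    push_cast
    rw [← Equiv.sum_comp σ]
    refine Finset.sum_congr rfl fun x _ => ?_
    rw [← Equiv.sum_comp σ]
    refine Finset.sum_congr rfl fun y _ => ?_
    rw [← Equiv.sum_comp σ]
    refine Finset.sum_congr rfl fun z _ => ?_
    simp
  simp only [h1]
  rw [SS_apply, Finset.mul_sum, Finset.sum_comm]
  refine Finset.sum_congr rfl fun x _ => ?_
  rw [Finset.mul_sum, Finset.sum_comm]
  refine Finset.sum_congr rfl fun y _ => ?_
  rw [Finset.mul_sum, Finset.sum_comm]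
  refine Finset.sum_congr rfl fun z _ => ?_
  rw [Finset.sum_boole]
  by_cases h : x ≠ y ∧ y ≠ z ∧ x ≠ z
  · have := UU_Pol π x y z h.1 h.2.1 h.2.2
    unfold UU at this
    rw [this, dist3, if_pos h, one_mul]
  · rw [dist3, if_neg h]
    have : (univ.filter fun σ : Equiv.Perm (Fin n) =>
        σ x < σ y ∧ σ y < σ z ∧ σ (π x) < σ (π y) ∧ σ (π y) < σ (π z)) = ∅ := by
      rw [Finset.filter_eq_empty_iff]
      rintro σ - ⟨ha, hb, -, -⟩
      refine h ⟨?_, ?_, ?_⟩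
      · rintro rfl; exact lt_irrefl _ ha
      · rintro rfl; exact lt_irrefl _ hb
      · rintro rfl; exact lt_irrefl _ (ha.trans hb)
    rw [this]; simp

theorem stmt7 (n : ℕ) (hn : 3 ≤ n) (lam : n.Partition)
    (p q r X₁ X₂ X₃ X₄ : ℚ)
    (hp : p = (lam.parts.count 1 : ℚ)) (hq : q = (lam.parts.count 2 : ℚ))
    (hr : r = (lam.parts.count 3 : ℚ))
    (hX1 : X₁ = p - 1) (hX2 : X₂ = (p - 1) * (p - 2) / 2 + q - 1)
    (hX3 : X₃ = (p - 1) * (p - 2) / 2 - q)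
    (hX4 : X₄ = (p - 1) * (p - 2) * (p - 3) / 3 - p - r + 2) :
    (∑ π ∈ conjClass n lam,
      ((((Finset.univ : Finset (Fin n × Fin n × Fin n)).filter fun x =>
          x.1 < x.2.1 ∧ x.2.1 < x.2.2 ∧ π x.1 < π x.2.1 ∧ π x.2.1 < π x.2.2).card : ℚ)))
    = ((conjClass n lam).card : ℚ) *
      ((n.choose 3 : ℚ) / 6 + ((n : ℚ) + 1) * (3 * (n : ℚ) - 4) * X₁ / 60
        + ((n : ℚ) + 1) * X₂ / 30 + (3 * (n : ℚ) - 2) * X₃ / 30 + X₄ / 15) := by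
  have hch : (n.choose 3 : ℚ) = (n : ℚ) * (n - 1) * (n - 2) / 6 := by
    obtain ⟨k, rfl⟩ : ∃ k, n = k + 3 := ⟨n - 3, by omega⟩
    have h := Nat.descFactorial_eq_factorial_mul_choose (k + 3) 3
    simp only [Nat.descFactorial, Nat.factorial] at h
    have h' : ((k : ℚ) + 1) * ((k + 2) * (k + 3)) = 6 * ((k + 3).choose 3 : ℚ) := by
      have : (k + 1) * ((k + 2) * (k + 3)) = 6 * (k + 3).choose 3 := by
        have e1 : k + 3 - 2 = k + 1 := by omega
        have e2 : k + 3 - 1 = k + 2 := by omega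
        rw [e1, e2] at h
        simpa using h
      exact_mod_cast this
    push_cast
    linarith
  have hconj : ∀ σ π : Equiv.Perm (Fin n),
      σ * π * σ⁻¹ ∈ conjClass n lam ↔ π ∈ conjClass n lam := by
    intro σ π
    have : (σ * π * σ⁻¹).partition = π.partition := by
      rw [← Equiv.Perm.partition_eq_of_isConj]
      exact (isConj_iff.mpr ⟨σ, rfl⟩ : IsConj π (σ * π * σ⁻¹)).symm
    simp only [conjClass, Finset.mem_filter, Finset.mem_univ, true_and, this]
  set f : Equiv.Perm (Fin n) → ℚ := fun π =>
      ((((Finset.univ : Finset (Fin n × Fin n × Fin n)).filter fun x =>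
          x.1 < x.2.1 ∧ x.2.1 < x.2.2 ∧ π x.1 < π x.2.1 ∧ π x.2.1 < π x.2.2).card : ℚ)) with hf
  have hs : ∀ σ : Equiv.Perm (Fin n),
      ∑ π ∈ conjClass n lam, f (σ * π * σ⁻¹) = ∑ π ∈ conjClass n lam, f π := by
    intro σ
    refine Finset.sum_equiv (MulAut.conj σ).toEquiv ?_ ?_
    · intro π; exact (hconj σ π).symm
    · intro π _; rfl
  have hv : ∀ π ∈ conjClass n lam, ∑ σ : Equiv.Perm (Fin n), f (σ * π * σ⁻¹) =
      n.factorial * ((n.choose 3 : ℚ) / 6 + ((n : ℚ) + 1) * (3 * (n : ℚ) - 4) * X₁ / 60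
        + ((n : ℚ) + 1) * X₂ / 30 + (3 * (n : ℚ) - 2) * X₃ / 30 + X₄ / 15) := by
    intro π hπ
    have hparts : π.partition.parts = lam.parts := by simpa [conjClass] using hπ
    have c1 := cycF1 π
    have c2 := cycF2 π
    have c3 := cycF3 π
    rw [hparts] at c1 c2 c3
    rw [← hp] at c1 c2 c3
    rw [← hq] at c2
    rw [← hr] at c3
    have h := SS_Pol π (p := p) (q := q) (r := r) c1 c2 c3
    rw [hf]
    refine (conj_sum π).trans ?_
    rw [h, hch, hX1, hX2, hX3, hX4]
    ring
  have hsum : (n.factorial : ℚ) * ∑ π ∈ conjClass n lam, f π =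
      ∑ π ∈ conjClass n lam, ∑ σ : Equiv.Perm (Fin n), f (σ * π * σ⁻¹) := by
    rw [Finset.sum_comm]
    simp only [hs]
    simp [Fintype.card_perm]
  rw [Finset.sum_congr rfl hv, Finset.sum_const, nsmul_eq_mul] at hsum
  have h0 : (n.factorial : ℚ) ≠ 0 := by positivity
  apply mul_left_cancel₀ h0
  rw [hsum]
  ring
end

section
/- Let n ≥ 3 and let λ be a partition of n. Then Σ_{π ∈ C_λ} occ₍₃₋₂₋₁₎(π) = |C_λ| · ( C(n,3)/6 − (n+1)(n−3)·X₁/30 + (n+1)·X₂/30 − (2n−3)·X₃/30 + X₄/15 ), where occ₍₃₋₂₋₁₎(π) = #{(i,j,k) : 1 ≤ i < j < k ≤ n, π(i) > π(j) > π(k)} is the number of occurrences of the classical pattern 321 in π. -/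
open Equiv Finset

/-- indicator of equality -/
def I {n : ℕ} (x a : Fin n) : ℚ := if x = a then 1 else 0

def Pat {m n : ℕ} (w : Fin m → Fin n) (k : Fin 6 → Fin m) : Prop :=
  w (k 0) < w (k 1) ∧ w (k 1) < w (k 2) ∧ w (k 5) < w (k 4) ∧ w (k 4) < w (k 3)

instance {m n : ℕ} (w : Fin m → Fin n) (k : Fin 6 → Fin m) : Decidable (Pat w k) := by
  unfold Pat; infer_instance

lemma key_s8 {n m : ℕ} (e : Fin m → Fin n) (he : Function.Injective e) (k : Fin 6 → Fin m) :
    (∑ σ : Perm (Fin n), if Pat (σ ∘ e) k then (1 : ℚ) else 0) * (m.factorial : ℚ)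
      = (n.factorial : ℚ) * (∑ τ : Perm (Fin m), if Pat τ k then (1 : ℚ) else 0) := by
  have h1 : ∀ τ : Perm (Fin m), (∑ σ : Perm (Fin n), if Pat (σ ∘ e) k then (1 : ℚ) else 0)
      = ∑ σ : Perm (Fin n), if Pat (σ ∘ e ∘ τ) k then (1 : ℚ) else 0 := by
    intro τ
    rw [← Equiv.sum_comp (Equiv.mulRight (τ.viaEmbedding ⟨e, he⟩))]
    refine Finset.sum_congr rfl fun σ _ => ?_
    have : (⇑((Equiv.mulRight (τ.viaEmbedding ⟨e, he⟩)) σ) ∘ e) = σ ∘ e ∘ τ := by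
      funext i
      have := Equiv.Perm.viaEmbedding_apply τ ⟨e, he⟩ i
      simp only [Function.Embedding.coeFn_mk] at this
      simp [this]
    rw [this]
  have h2 : ∀ σ : Perm (Fin n), (∑ τ : Perm (Fin m), if Pat (σ ∘ e ∘ τ) k then (1 : ℚ) else 0)
      = ∑ τ : Perm (Fin m), if Pat τ k then (1 : ℚ) else 0 := by
    intro σ
    have hm : StrictMono ((σ ∘ e) ∘ Tuple.sort (σ ∘ e)) :=
      (Tuple.monotone_sort (σ ∘ e)).strictMono_of_injective
        ((σ.injective.comp he).comp (Equiv.injective _))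
    rw [← Equiv.sum_comp (Equiv.mulLeft (Tuple.sort (σ ∘ e)))]
    refine Finset.sum_congr rfl fun τ _ => ?_
    have : Pat (σ ∘ e ∘ ⇑((Equiv.mulLeft (Tuple.sort (σ ∘ e))) τ)) k ↔ Pat τ k := by
      unfold Pat
      have h (i j) := hm.lt_iff_lt (a := τ i) (b := τ j)
      simp only [Function.comp_apply] at h
      simp [h]
    simp only [this]
  have h3 : ∑ τ : Perm (Fin m), ∑ σ : Perm (Fin n), (if Pat (σ ∘ e ∘ τ) k then (1 : ℚ) else 0)
     = ∑ τ : Perm (Fin m), (∑ σ : Perm (Fin n), if Pat (σ ∘ e) k then (1 : ℚ) else 0) :=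
    Finset.sum_congr rfl fun τ _ => (h1 τ).symm
  rw [Finset.sum_comm, Finset.sum_congr rfl (fun σ _ => h2 σ)] at h3
  simp only [Finset.sum_const, Finset.card_univ, Fintype.card_perm, Fintype.card_fin,
    nsmul_eq_mul] at h3
  rw [h3, mul_comm]

def Cnt {n : ℕ} (a b c x y z : Fin n) : ℚ :=
  ∑ σ : Perm (Fin n), if σ a < σ b ∧ σ b < σ c ∧ σ z < σ y ∧ σ y < σ x then (1 : ℚ) else 0

lemma leaf {n m : ℕ} {a b c x y z : Fin n} (e : Fin m → Fin n) (he : (List.ofFn e).Nodup)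
    (k : Fin 6 → Fin m) (N : ℕ)
    (hN : (univ.filter fun τ : Perm (Fin m) => Pat τ k).card = N)
    (ha : a = e (k 0)) (hb : b = e (k 1)) (hc : c = e (k 2))
    (hx : x = e (k 3)) (hy : y = e (k 4)) (hz : z = e (k 5))
    {v : ℚ} (hv : (N : ℚ) / (m.factorial : ℚ) = v) :
    Cnt a b c x y z = n.factorial * v := by
  have h := key_s8 e (List.nodup_ofFn.1 he) k
  rw [Finset.sum_boole (p := fun τ : Perm (Fin m) => Pat τ k), hN] at h
  have hm : (m.factorial : ℚ) ≠ 0 := by positivity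
  rw [← hv, ← mul_div_assoc, ← h, mul_div_cancel_right₀ _ hm]
  subst ha hb hc hx hy hz
  rfl

def poly {n : ℕ} (a b c x y z : Fin n) : ℚ :=
    (1) / 36 * (1) +
    (-7) / 360 * (I x a) +
    (1) / 180 * (I y b) +
    (-7) / 360 * (I z c) +
    (-1) / 360 * (I x b) +
    (1) / 45 * (I x c) +
    (-1) / 360 * (I y a) +
    (-1) / 360 * (I y c) +
    (1) / 45 * (I z a) +
    (-1) / 360 * (I z b) +
    (-1) / 72 * (I x a * I y b) +
    (1) / 90 * (I x a * I z c) +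
    (-1) / 72 * (I y b * I z c) +
    (-1) / 180 * (I x a * I y c) +
    (-1) / 180 * (I x a * I z b) +
    (1) / 36 * (I y b * I x c) +
    (1) / 36 * (I y b * I z a) +
    (-1) / 180 * (I z c * I x b) +
    (-1) / 180 * (I z c * I y a) +
    (7) / 360 * (I x b * I y a) +
    (1) / 90 * (I x c * I z a) +
    (7) / 360 * (I y c * I z b) +
    (-1) / 45 * (I x b * I y c) +
    (-1) / 180 * (I x c * I z b) +
    (-1) / 180 * (I y a * I x c) +
    (-1) / 180 * (I y c * I z a) +
    (-1) / 180 * (I z a * I x b) +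
    (-1) / 45 * (I z b * I y a) +
    (1) / 45 * (I x a * I y b * I z c) +
    (-1) / 90 * (I x a * I y c * I z b) +
    (1) / 45 * (I y b * I x c * I z a) +
    (-1) / 90 * (I z c * I x b * I y a) +
    (-1) / 90 * (I x b * I y c * I z a) +
    (-1) / 90 * (I x c * I z b * I y a)

lemma cases4 {n : ℕ} {a b c : Fin n} (hab : a ≠ b) (hac : a ≠ c) (hbc : b ≠ c) (x : Fin n) :
    (x = a ∧ x ≠ b ∧ x ≠ c ∧ I x a = 1 ∧ I x b = 0 ∧ I x c = 0) ∨
    (x = b ∧ x ≠ a ∧ x ≠ c ∧ I x a = 0 ∧ I x b = 1 ∧ I x c = 0) ∨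
    (x = c ∧ x ≠ a ∧ x ≠ b ∧ I x a = 0 ∧ I x b = 0 ∧ I x c = 1) ∨
    (x ≠ a ∧ x ≠ b ∧ x ≠ c ∧ I x a = 0 ∧ I x b = 0 ∧ I x c = 0) := by
  unfold I
  by_cases h1 : x = a
  · subst h1; simp [hab, hac]
  by_cases h2 : x = b
  · subst h2; simp [hbc, h1]
  by_cases h3 : x = c
  · subst h3; simp [h2, h1]
  simp [h1, h2, h3]

lemma poly_val {n : ℕ} {a b c x y z : Fin n} (hab : a ≠ b) (hac : a ≠ c) (hbc : b ≠ c)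
    (hxy : x ≠ y) (hxz : x ≠ z) (hyz : y ≠ z) :
    Cnt a b c x y z = n.factorial * poly a b c x y z := by
  obtain ⟨hx, hx1, hx2, hxa, hxb, hxc⟩ | ⟨hx, hx1, hx2, hxa, hxb, hxc⟩ |
    ⟨hx, hx1, hx2, hxa, hxb, hxc⟩ | ⟨hx, hx1, hx2, hxa, hxb, hxc⟩ := cases4 hab hac hbc x <;>
  obtain ⟨hy, hy1, hy2, hya, hyb, hyc⟩ | ⟨hy, hy1, hy2, hya, hyb, hyc⟩ |
    ⟨hy, hy1, hy2, hya, hyb, hyc⟩ | ⟨hy, hy1, hy2, hya, hyb, hyc⟩ := cases4 hab hac hbc y <;>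
  first
  | (exact absurd (hx.trans hy.symm) hxy)
  | skip
  all_goals (
    obtain ⟨hz, hz1, hz2, hza, hzb, hzc⟩ | ⟨hz, hz1, hz2, hza, hzb, hzc⟩ |
    ⟨hz, hz1, hz2, hza, hzb, hzc⟩ | ⟨hz, hz1, hz2, hza, hzb, hzc⟩ := cases4 hab hac hbc z <;>
    first
    | (exact absurd (hx.trans hz.symm) hxz)
    | (exact absurd (hy.trans hz.symm) hyz)
    | skip)
  · exact leaf ![a, b, c] (by simp; grind) ![0, 1, 2, 0, 1, 2] 0 (by decide +kernel) rfl rfl rfl hx hy hz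
      (by simp only [poly, hxa, hxb, hxc, hya, hyb, hyc, hza, hzb, hzc]; norm_num [Nat.factorial])
  · exact leaf ![a, b, c, z] (by simp; grind) ![0, 1, 2, 0, 1, 3] 0 (by decide +kernel) rfl rfl rfl hx hy rfl
      (by simp only [poly, hxa, hxb, hxc, hya, hyb, hyc, hza, hzb, hzc]; norm_num [Nat.factorial])
  · exact leaf ![a, b, c] (by simp; grind) ![0, 1, 2, 0, 2, 1] 0 (by decide +kernel) rfl rfl rfl hx hy hz
      (by simp only [poly, hxa, hxb, hxc, hya, hyb, hyc, hza, hzb, hzc]; norm_num [Nat.factorial])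
  · exact leaf ![a, b, c, z] (by simp; grind) ![0, 1, 2, 0, 2, 3] 0 (by decide +kernel) rfl rfl rfl hx hy rfl
      (by simp only [poly, hxa, hxb, hxc, hya, hyb, hyc, hza, hzb, hzc]; norm_num [Nat.factorial])
  · exact leaf ![a, b, c, y] (by simp; grind) ![0, 1, 2, 0, 3, 1] 0 (by decide +kernel) rfl rfl rfl hx rfl hz
      (by simp only [poly, hxa, hxb, hxc, hya, hyb, hyc, hza, hzb, hzc]; norm_num [Nat.factorial])
  · exact leaf ![a, b, c, y] (by simp; grind) ![0, 1, 2, 0, 3, 2] 0 (by decide +kernel) rfl rfl rfl hx rfl hz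
      (by simp only [poly, hxa, hxb, hxc, hya, hyb, hyc, hza, hzb, hzc]; norm_num [Nat.factorial])
  · exact leaf ![a, b, c, y, z] (by simp; grind) ![0, 1, 2, 0, 3, 4] 1 (by decide +kernel) rfl rfl rfl hx rfl rfl
      (by simp only [poly, hxa, hxb, hxc, hya, hyb, hyc, hza, hzb, hzc]; norm_num [Nat.factorial])
  · exact leaf ![a, b, c] (by simp; grind) ![0, 1, 2, 1, 0, 2] 0 (by decide +kernel) rfl rfl rfl hx hy hz
      (by simp only [poly, hxa, hxb, hxc, hya, hyb, hyc, hza, hzb, hzc]; norm_num [Nat.factorial])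
  · exact leaf ![a, b, c, z] (by simp; grind) ![0, 1, 2, 1, 0, 3] 1 (by decide +kernel) rfl rfl rfl hx hy rfl
      (by simp only [poly, hxa, hxb, hxc, hya, hyb, hyc, hza, hzb, hzc]; norm_num [Nat.factorial])
  · exact leaf ![a, b, c] (by simp; grind) ![0, 1, 2, 1, 2, 0] 0 (by decide +kernel) rfl rfl rfl hx hy hz
      (by simp only [poly, hxa, hxb, hxc, hya, hyb, hyc, hza, hzb, hzc]; norm_num [Nat.factorial])
  · exact leaf ![a, b, c, z] (by simp; grind) ![0, 1, 2, 1, 2, 3] 0 (by decide +kernel) rfl rfl rfl hx hy rfl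
      (by simp only [poly, hxa, hxb, hxc, hya, hyb, hyc, hza, hzb, hzc]; norm_num [Nat.factorial])
  · exact leaf ![a, b, c, y] (by simp; grind) ![0, 1, 2, 1, 3, 0] 1 (by decide +kernel) rfl rfl rfl hx rfl hz
      (by simp only [poly, hxa, hxb, hxc, hya, hyb, hyc, hza, hzb, hzc]; norm_num [Nat.factorial])
  · exact leaf ![a, b, c, y] (by simp; grind) ![0, 1, 2, 1, 3, 2] 0 (by decide +kernel) rfl rfl rfl hx rfl hz
      (by simp only [poly, hxa, hxb, hxc, hya, hyb, hyc, hza, hzb, hzc]; norm_num [Nat.factorial])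
  · exact leaf ![a, b, c, y, z] (by simp; grind) ![0, 1, 2, 1, 3, 4] 3 (by decide +kernel) rfl rfl rfl hx rfl rfl
      (by simp only [poly, hxa, hxb, hxc, hya, hyb, hyc, hza, hzb, hzc]; norm_num [Nat.factorial])
  · exact leaf ![a, b, c] (by simp; grind) ![0, 1, 2, 2, 0, 1] 0 (by decide +kernel) rfl rfl rfl hx hy hz
      (by simp only [poly, hxa, hxb, hxc, hya, hyb, hyc, hza, hzb, hzc]; norm_num [Nat.factorial])
  · exact leaf ![a, b, c, z] (by simp; grind) ![0, 1, 2, 2, 0, 3] 1 (by decide +kernel) rfl rfl rfl hx hy rfl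
      (by simp only [poly, hxa, hxb, hxc, hya, hyb, hyc, hza, hzb, hzc]; norm_num [Nat.factorial])
  · exact leaf ![a, b, c] (by simp; grind) ![0, 1, 2, 2, 1, 0] 1 (by decide +kernel) rfl rfl rfl hx hy hz
      (by simp only [poly, hxa, hxb, hxc, hya, hyb, hyc, hza, hzb, hzc]; norm_num [Nat.factorial])
  · exact leaf ![a, b, c, z] (by simp; grind) ![0, 1, 2, 2, 1, 3] 2 (by decide +kernel) rfl rfl rfl hx hy rfl
      (by simp only [poly, hxa, hxb, hxc, hya, hyb, hyc, hza, hzb, hzc]; norm_num [Nat.factorial])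
  · exact leaf ![a, b, c, y] (by simp; grind) ![0, 1, 2, 2, 3, 0] 2 (by decide +kernel) rfl rfl rfl hx rfl hz
      (by simp only [poly, hxa, hxb, hxc, hya, hyb, hyc, hza, hzb, hzc]; norm_num [Nat.factorial])
  · exact leaf ![a, b, c, y] (by simp; grind) ![0, 1, 2, 2, 3, 1] 1 (by decide +kernel) rfl rfl rfl hx rfl hz
      (by simp only [poly, hxa, hxb, hxc, hya, hyb, hyc, hza, hzb, hzc]; norm_num [Nat.factorial])
  · exact leaf ![a, b, c, y, z] (by simp; grind) ![0, 1, 2, 2, 3, 4] 6 (by decide +kernel) rfl rfl rfl hx rfl rfl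
      (by simp only [poly, hxa, hxb, hxc, hya, hyb, hyc, hza, hzb, hzc]; norm_num [Nat.factorial])
  · exact leaf ![a, b, c, x] (by simp; grind) ![0, 1, 2, 3, 0, 1] 0 (by decide +kernel) rfl rfl rfl rfl hy hz
      (by simp only [poly, hxa, hxb, hxc, hya, hyb, hyc, hza, hzb, hzc]; norm_num [Nat.factorial])
  · exact leaf ![a, b, c, x] (by simp; grind) ![0, 1, 2, 3, 0, 2] 0 (by decide +kernel) rfl rfl rfl rfl hy hz
      (by simp only [poly, hxa, hxb, hxc, hya, hyb, hyc, hza, hzb, hzc]; norm_num [Nat.factorial])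
  · exact leaf ![a, b, c, x, z] (by simp; grind) ![0, 1, 2, 3, 0, 4] 3 (by decide +kernel) rfl rfl rfl rfl hy rfl
      (by simp only [poly, hxa, hxb, hxc, hya, hyb, hyc, hza, hzb, hzc]; norm_num [Nat.factorial])
  · exact leaf ![a, b, c, x] (by simp; grind) ![0, 1, 2, 3, 1, 0] 2 (by decide +kernel) rfl rfl rfl rfl hy hz
      (by simp only [poly, hxa, hxb, hxc, hya, hyb, hyc, hza, hzb, hzc]; norm_num [Nat.factorial])
  · exact leaf ![a, b, c, x] (by simp; grind) ![0, 1, 2, 3, 1, 2] 0 (by decide +kernel) rfl rfl rfl rfl hy hz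
      (by simp only [poly, hxa, hxb, hxc, hya, hyb, hyc, hza, hzb, hzc]; norm_num [Nat.factorial])
  · exact leaf ![a, b, c, x, z] (by simp; grind) ![0, 1, 2, 3, 1, 4] 4 (by decide +kernel) rfl rfl rfl rfl hy rfl
      (by simp only [poly, hxa, hxb, hxc, hya, hyb, hyc, hza, hzb, hzc]; norm_num [Nat.factorial])
  · exact leaf ![a, b, c, x] (by simp; grind) ![0, 1, 2, 3, 2, 0] 1 (by decide +kernel) rfl rfl rfl rfl hy hz
      (by simp only [poly, hxa, hxb, hxc, hya, hyb, hyc, hza, hzb, hzc]; norm_num [Nat.factorial])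
  · exact leaf ![a, b, c, x] (by simp; grind) ![0, 1, 2, 3, 2, 1] 1 (by decide +kernel) rfl rfl rfl rfl hy hz
      (by simp only [poly, hxa, hxb, hxc, hya, hyb, hyc, hza, hzb, hzc]; norm_num [Nat.factorial])
  · exact leaf ![a, b, c, x, z] (by simp; grind) ![0, 1, 2, 3, 2, 4] 3 (by decide +kernel) rfl rfl rfl rfl hy rfl
      (by simp only [poly, hxa, hxb, hxc, hya, hyb, hyc, hza, hzb, hzc]; norm_num [Nat.factorial])
  · exact leaf ![a, b, c, x, y] (by simp; grind) ![0, 1, 2, 3, 4, 0] 6 (by decide +kernel) rfl rfl rfl rfl rfl hz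
      (by simp only [poly, hxa, hxb, hxc, hya, hyb, hyc, hza, hzb, hzc]; norm_num [Nat.factorial])
  · exact leaf ![a, b, c, x, y] (by simp; grind) ![0, 1, 2, 3, 4, 1] 3 (by decide +kernel) rfl rfl rfl rfl rfl hz
      (by simp only [poly, hxa, hxb, hxc, hya, hyb, hyc, hza, hzb, hzc]; norm_num [Nat.factorial])
  · exact leaf ![a, b, c, x, y] (by simp; grind) ![0, 1, 2, 3, 4, 2] 1 (by decide +kernel) rfl rfl rfl rfl rfl hz
      (by simp only [poly, hxa, hxb, hxc, hya, hyb, hyc, hza, hzb, hzc]; norm_num [Nat.factorial])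
  · exact leaf ![a, b, c, x, y, z] (by simp; grind) ![0, 1, 2, 3, 4, 5] 20 (by decide +kernel) rfl rfl rfl rfl rfl rfl
      (by simp only [poly, hxa, hxb, hxc, hya, hyb, hyc, hza, hzb, hzc]; norm_num [Nat.factorial])


def T {n : ℕ} (f : Fin n → Fin n → Fin n → ℚ) : ℚ :=
  ∑ a, ∑ b, ∑ c, if a ≠ b ∧ a ≠ c ∧ b ≠ c then f a b c else 0

lemma T_add {n : ℕ} (f g : Fin n → Fin n → Fin n → ℚ) :
    T (fun a b c => f a b c + g a b c) = T f + T g := by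
  simp only [T, ← Finset.sum_add_distrib]
  refine Finset.sum_congr rfl fun a _ => Finset.sum_congr rfl fun b _ =>
    Finset.sum_congr rfl fun c _ => ?_
  split_ifs <;> simp

lemma T_smul {n : ℕ} (s : ℚ) (g : Fin n → Fin n → Fin n → ℚ) :
    T (fun a b c => s * g a b c) = s * T g := by
  simp only [T, Finset.mul_sum]
  refine Finset.sum_congr rfl fun a _ => Finset.sum_congr rfl fun b _ =>
    Finset.sum_congr rfl fun c _ => ?_
  split_ifs <;> simp

lemma T_congr {n : ℕ} {f g : Fin n → Fin n → Fin n → ℚ}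
    (h : ∀ a b c, a ≠ b → a ≠ c → b ≠ c → f a b c = g a b c) : T f = T g := by
  refine Finset.sum_congr rfl fun a _ => Finset.sum_congr rfl fun b _ =>
    Finset.sum_congr rfl fun c _ => ?_
  split_ifs with h1
  · exact h a b c h1.1 h1.2.1 h1.2.2
  · rfl

lemma T132 {n : ℕ} {f : Fin n → Fin n → Fin n → ℚ} {v : ℚ} (h : T f = v) :
    T (fun a b c => f a c b) = v := by
  rw [← h]
  unfold T
  refine Finset.sum_congr rfl fun a _ => ?_
  rw [Finset.sum_comm]
  refine Finset.sum_congr rfl fun b _ => Finset.sum_congr rfl fun c _ => ?_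
  exact if_congr (by grind) rfl rfl

lemma T213 {n : ℕ} {f : Fin n → Fin n → Fin n → ℚ} {v : ℚ} (h : T f = v) :
    T (fun a b c => f b a c) = v := by
  rw [← h]
  unfold T
  rw [Finset.sum_comm]
  refine Finset.sum_congr rfl fun a _ => Finset.sum_congr rfl fun b _ =>
    Finset.sum_congr rfl fun c _ => ?_
  exact if_congr (by grind) rfl rfl

lemma T231 {n : ℕ} {f : Fin n → Fin n → Fin n → ℚ} {v : ℚ} (h : T f = v) :
    T (fun a b c => f b c a) = v := T213 (T132 h)

lemma T312 {n : ℕ} {f : Fin n → Fin n → Fin n → ℚ} {v : ℚ} (h : T f = v) :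
    T (fun a b c => f c a b) = v := T132 (T213 h)

lemma T321 {n : ℕ} {f : Fin n → Fin n → Fin n → ℚ} {v : ℚ} (h : T f = v) :
    T (fun a b c => f c b a) = v := T132 (T231 h)

def U {n : ℕ} (g : Fin n → Fin n → ℚ) : ℚ := ∑ a, ∑ b, if a ≠ b then g a b else 0

lemma T_U {n : ℕ} (g : Fin n → Fin n → ℚ) : T (fun a b _ => g a b) = ((n : ℚ) - 2) * U g := by
  unfold T U
  simp only [Finset.mul_sum]
  refine Finset.sum_congr rfl fun a _ => Finset.sum_congr rfl fun b _ => ?_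
  by_cases h : a = b
  · simp [h]
  have : ∀ c, (if a ≠ b ∧ a ≠ c ∧ b ≠ c then g a b else 0)
      = g a b - (if a = c then g a b else 0) - (if b = c then g a b else 0) := by
    intro c; by_cases h1 : a = c <;> by_cases h2 : b = c <;> simp_all
  simp only [this, Finset.sum_sub_distrib]
  simp [h]; ring

/-- number of fixed points -/
def fx {n : ℕ} (π : Perm (Fin n)) : ℚ := ∑ a, I (π a) a
/-- number of points in 2-cycles -/
def tw {n : ℕ} (π : Perm (Fin n)) : ℚ := ∑ a, if π a ≠ a ∧ π (π a) = a then 1 else 0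
/-- number of points in 3-cycles -/
def th {n : ℕ} (π : Perm (Fin n)) : ℚ := ∑ a, if π a ≠ a ∧ π (π (π a)) = a then 1 else 0

lemma rep1 {n : ℕ} : T (fun _ _ _ : Fin n => 1) = ((n : ℚ) - 2) * (n * (n - 1)) := by
  rw [T_U (fun _ _ => 1)]
  have : ∀ a b : Fin n, (if a ≠ b then (1 : ℚ) else 0) = 1 - if a = b then 1 else 0 := by
    intro a b; split_ifs <;> simp_all
  simp only [U, this, Finset.sum_sub_distrib]
  simp; left; ring

lemma rep2 {n : ℕ} (π : Perm (Fin n)) :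
    T (fun a _ _ => I (π a) a) = ((n : ℚ) - 2) * ((n - 1) * fx π) := by
  rw [T_U (fun a _ => I (π a) a)]
  have : ∀ a b : Fin n, (if a ≠ b then I (π a) a else 0)
      = I (π a) a - if a = b then I (π a) a else 0 := by
    intro a b; split_ifs <;> simp_all
  simp only [U, this, Finset.sum_sub_distrib]
  simp [fx, ← Finset.mul_sum]; left; ring

lemma rep3 {n : ℕ} (π : Perm (Fin n)) :
    T (fun a b _ => I (π a) b) = ((n : ℚ) - 2) * (n - fx π) := by
  rw [T_U (fun a b => I (π a) b)]
  have : ∀ a b : Fin n, (if a ≠ b then I (π a) b else 0)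
      = if π a = b then 1 - I (π a) a else 0 := by
    intro a b; unfold I; split_ifs <;> simp_all
  simp only [U, this]
  simp [fx]

lemma rep4 {n : ℕ} (π : Perm (Fin n)) :
    T (fun a b _ => I (π a) a * I (π b) b) = ((n : ℚ) - 2) * (fx π * fx π - fx π) := by
  rw [T_U (fun a b => I (π a) a * I (π b) b)]
  have : ∀ a b : Fin n, (if a ≠ b then I (π a) a * I (π b) b else 0)
      = I (π a) a * I (π b) b - if a = b then I (π a) a else 0 := by
    intro a b; unfold I; split_ifs <;> simp_all
  simp only [U, this, Finset.sum_sub_distrib]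
  simp [fx, Finset.sum_mul_sum]

lemma rep5 {n : ℕ} (π : Perm (Fin n)) :
    T (fun a b c => I (π a) a * I (π b) c) = fx π * (n - fx π) := by
  have : ∀ a b c : Fin n, (if a ≠ b ∧ a ≠ c ∧ b ≠ c then I (π a) a * I (π b) c else 0)
      = if π b = c then I (π a) a * (1 - I (π b) b) else 0 := by
    intro a b c
    have h := π.injective.eq_iff (a := a) (b := b)
    have h' := π.injective.eq_iff (a := b) (b := c)
    have h'' := π.injective.eq_iff (a := a) (b := c)
    unfold I; split_ifs <;> grind
  simp only [T, this]
  simp [fx, ← Finset.mul_sum, ← Finset.sum_mul]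

lemma rep6 {n : ℕ} (π : Perm (Fin n)) :
    T (fun a b _ => I (π a) b * I (π b) a) = ((n : ℚ) - 2) * tw π := by
  rw [T_U (fun a b => I (π a) b * I (π b) a)]
  have : ∀ a b : Fin n, (if a ≠ b then I (π a) b * I (π b) a else 0)
      = if π a = b then (if π a ≠ a ∧ π (π a) = a then 1 else 0) else 0 := by
    intro a b; unfold I; split_ifs <;> simp_all
  simp only [U, this]
  simp [tw]

lemma rep7 {n : ℕ} (π : Perm (Fin n)) :
    T (fun a b c => I (π a) b * I (π b) c) = n - fx π - tw π := by
  have : ∀ a b c : Fin n, (if a ≠ b ∧ a ≠ c ∧ b ≠ c then I (π a) b * I (π b) c else 0)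
      = if π b = c then (if π a = b then
          (1 - I (π a) a - (if π a ≠ a ∧ π (π a) = a then 1 else 0)) else 0) else 0 := by
    intro a b c
    have h := π.injective.eq_iff (a := a) (b := b)
    have h' := π.injective.eq_iff (a := b) (b := c)
    have h'' := π.injective.eq_iff (a := a) (b := c)
    unfold I; split_ifs <;> grind
  simp only [T, this]
  simp [fx, tw]

lemma rep8 {n : ℕ} (π : Perm (Fin n)) :
    T (fun a b c => I (π a) a * I (π b) b * I (π c) c)
      = fx π * fx π * fx π - 3 * (fx π * fx π) + 2 * fx π := by
  have : ∀ a b c : Fin n,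
      (if a ≠ b ∧ a ≠ c ∧ b ≠ c then I (π a) a * I (π b) b * I (π c) c else 0)
      = I (π a) a * I (π b) b * I (π c) c - (if a = b then I (π a) a * I (π c) c else 0)
        - (if a = c then I (π a) a * I (π b) b else 0)
        - (if b = c then I (π a) a * I (π b) b else 0)
        + (if a = b then if a = c then 2 * I (π a) a else 0 else 0) := by
    intro a b c
    by_cases h1 : a = b <;> by_cases h2 : a = c <;> by_cases h3 : b = c <;> unfold I <;>
      simp_all <;> split_ifs <;> norm_num
  simp only [T, this, Finset.sum_sub_distrib, Finset.sum_add_distrib]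
  simp [fx, ← Finset.mul_sum, ← Finset.sum_mul, Finset.sum_ite_irrel]
  ring

lemma rep9 {n : ℕ} (π : Perm (Fin n)) :
    T (fun a b c => I (π a) a * I (π b) c * I (π c) b)
      = T (fun a b c => I (π a) a * I (π b) c * I (π c) b) := rfl

lemma rep10 {n : ℕ} (π : Perm (Fin n)) :
    T (fun a b c => I (π a) b * I (π b) c * I (π c) a) = th π := by
  have : ∀ a b c : Fin n,
      (if a ≠ b ∧ a ≠ c ∧ b ≠ c then I (π a) b * I (π b) c * I (π c) a else 0)
      = if π b = c then (if π a = b then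
          (if π a ≠ a ∧ π (π (π a)) = a then 1 else 0) else 0) else 0 := by
    intro a b c
    have h := π.injective.eq_iff (a := a) (b := b)
    have h' := π.injective.eq_iff (a := b) (b := c)
    have h'' := π.injective.eq_iff (a := a) (b := c)
    unfold I; split_ifs <;> grind
  simp only [T, this]
  simp [th]

lemma T_poly {n : ℕ} (π : Perm (Fin n)) :
    T (fun a b c => poly a b c (π a) (π b) (π c)) =
      1 / 36 * (((n : ℚ) - 2) * (n * (n - 1))) - 1 / 30 * (((n : ℚ) - 2) * ((n - 1) * fx π))
      + 1 / 30 * (((n : ℚ) - 2) * (n - fx π)) - 1 / 60 * (((n : ℚ) - 2) * (fx π * fx π - fx π))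
      + 1 / 30 * (fx π * (n - fx π)) + 1 / 20 * (((n : ℚ) - 2) * tw π)
      - 1 / 15 * (n - fx π - tw π)
      + 1 / 45 * (fx π * fx π * fx π - 3 * (fx π * fx π) + 2 * fx π) - 1 / 45 * th π := by
  simp only [poly, T_add, T_smul, rep1, rep2 π, rep3 π, rep4 π, rep5 π, rep6 π, rep7 π, rep8 π,
    rep10 π, T213 (rep2 π), T312 (rep2 π), T132 (rep3 π), T213 (rep3 π), T231 (rep3 π), T312 (rep3 π), T321 (rep3 π), T132 (rep4 π), T231 (rep4 π), T132 (rep5 π), T213 (rep5 π), T231 (rep5 π), T312 (rep5 π), T321 (rep5 π), T132 (rep6 π), T231 (rep6 π), T132 (rep7 π), T213 (rep7 π), T231 (rep7 π), T312 (rep7 π), T321 (rep7 π), T213 (rep9 π), T312 (rep9 π), T132 (rep10 π)]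
  ring

lemma fx_eq {n : ℕ} (π : Perm (Fin n)) : fx π = (π.partition.parts.count 1 : ℚ) := by
  have h0 : π.cycleType.count 1 = 0 := by
    rw [Multiset.count_eq_zero]
    intro h
    have := Equiv.Perm.two_le_of_mem_cycleType h
    omega
  rw [Equiv.Perm.parts_partition, Multiset.count_add, h0, Multiset.count_replicate_self, zero_add,
    ← Finset.card_compl]
  unfold fx I
  rw [Finset.sum_boole]
  congr 2
  ext a
  simp

lemma cyc_card {n : ℕ} (π : Perm (Fin n)) (k : ℕ) (hk : k.Prime) :
    (univ.filter fun a => π a ≠ a ∧ (π ^ k) a = a).card = π.partition.parts.count k * k := by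
  have h0 : π.partition.parts.count k = (π.cycleFactorsFinset.filter fun c => c.support.card = k).card := by
    rw [Equiv.Perm.parts_partition, Multiset.count_add, Multiset.count_replicate,
      if_neg hk.one_lt.ne, add_zero, Equiv.Perm.cycleType_def, Multiset.count_map]
    simp only [Function.comp_apply, eq_comm (a := k)]
    rfl
  have h1 : (univ.filter fun a => π a ≠ a ∧ (π ^ k) a = a)
      = (π.cycleFactorsFinset.filter fun c => c.support.card = k).biUnion fun c => c.support := by
    ext a
    simp only [Finset.mem_filter, Finset.mem_univ, true_and, Finset.mem_biUnion]
    constructor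
    · rintro ⟨h1, h2⟩
      have hc : π.cycleOf a ∈ π.cycleFactorsFinset :=
        Equiv.Perm.cycleOf_mem_cycleFactorsFinset_iff.2 (Equiv.Perm.mem_support.2 h1)
      have ha : a ∈ (π.cycleOf a).support := by
        rw [Equiv.Perm.mem_support_cycleOf_iff]
        exact ⟨Equiv.Perm.SameCycle.refl _ _, Equiv.Perm.mem_support.2 h1⟩
      refine ⟨π.cycleOf a, ⟨hc, ?_⟩, ha⟩
      have hd := ((Equiv.Perm.isCycleOn_support_of_mem_cycleFactorsFinset hc).pow_apply_eq ha).1 h2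
      have h3 := (Equiv.Perm.mem_cycleFactorsFinset_iff.1 hc).1.two_le_card_support
      rcases (Nat.dvd_prime hk).1 hd with h | h
      · omega
      · exact h
    · rintro ⟨c, ⟨hc, hck⟩, ha⟩
      refine ⟨Equiv.Perm.mem_support.1 (Equiv.Perm.mem_cycleFactorsFinset_support_le hc ha), ?_⟩
      exact ((Equiv.Perm.isCycleOn_support_of_mem_cycleFactorsFinset hc).pow_apply_eq ha).2 (by rw [hck])
  rw [h1, h0, Finset.card_biUnion]
  · rw [Finset.sum_congr rfl (fun c hc => (Finset.mem_filter.1 hc).2)]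
    simp
  · intro c hc d hd hcd
    exact (π.cycleFactorsFinset_pairwise_disjoint (Finset.mem_filter.1 hc).1
      (Finset.mem_filter.1 hd).1 hcd).disjoint_support

lemma tw_eq {n : ℕ} (π : Perm (Fin n)) : tw π = (π.partition.parts.count 2 : ℚ) * 2 := by
  have := cyc_card π 2 Nat.prime_two
  unfold tw
  rw [Finset.sum_boole]
  exact_mod_cast this

lemma th_eq {n : ℕ} (π : Perm (Fin n)) : th π = (π.partition.parts.count 3 : ℚ) * 3 := by
  have := cyc_card π 3 Nat.prime_three
  unfold th
  rw [Finset.sum_boole]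
  exact_mod_cast this

def occ {n : ℕ} (π : Perm (Fin n)) : ℚ :=
  (((Finset.univ : Finset (Fin n × Fin n × Fin n)).filter fun x =>
          x.1 < x.2.1 ∧ x.2.1 < x.2.2 ∧ π x.2.1 < π x.1 ∧ π x.2.2 < π x.2.1).card : ℚ)

lemma occ_conj {n : ℕ} (π σ : Perm (Fin n)) : occ (σ * π * σ⁻¹) =
    ∑ a, ∑ b, ∑ c, if σ a < σ b ∧ σ b < σ c ∧ σ (π c) < σ (π b) ∧ σ (π b) < σ (π a)
      then (1 : ℚ) else 0 := by
  unfold occ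
  rw [← Finset.sum_boole, Fintype.sum_prod_type, ← Equiv.sum_comp σ]
  refine Finset.sum_congr rfl fun a _ => ?_
  rw [Fintype.sum_prod_type, ← Equiv.sum_comp σ]
  refine Finset.sum_congr rfl fun b _ => ?_
  rw [← Equiv.sum_comp σ]
  refine Finset.sum_congr rfl fun c _ => ?_
  simp [and_comm]

lemma sum_occ {n : ℕ} (π : Perm (Fin n)) : ∑ σ : Perm (Fin n), occ (σ * π * σ⁻¹) =
    n.factorial * T (fun a b c => poly a b c (π a) (π b) (π c)) := by
  rw [← T_smul]
  have h : T (fun a b c => (n.factorial : ℚ) * poly a b c (π a) (π b) (π c))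
      = T (fun a b c => Cnt a b c (π a) (π b) (π c)) :=
    T_congr fun a b c h1 h2 h3 => (poly_val h1 h2 h3 (π.injective.ne h1) (π.injective.ne h2)
      (π.injective.ne h3)).symm
  rw [h]
  simp only [occ_conj]
  rw [Finset.sum_comm]
  refine Finset.sum_congr rfl fun a _ => ?_
  rw [Finset.sum_comm]
  refine Finset.sum_congr rfl fun b _ => ?_
  rw [Finset.sum_comm]
  refine Finset.sum_congr rfl fun c _ => ?_
  split_ifs with h
  · rfl
  · refine Finset.sum_eq_zero fun σ _ => if_neg ?_
    rintro ⟨h1, h2, -, -⟩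
    apply h
    refine ⟨?_, ?_, ?_⟩
    · rintro rfl; exact lt_irrefl _ h1
    · rintro rfl; exact lt_irrefl _ (h1.trans h2)
    · rintro rfl; exact lt_irrefl _ h2

lemma conj_sum_s8 {n : ℕ} (lam : n.Partition) (σ : Perm (Fin n)) :
    ∑ π ∈ conjClass n lam, occ (σ * π * σ⁻¹) = ∑ π ∈ conjClass n lam, occ π := by
  refine Finset.sum_equiv (MulAut.conj σ).toEquiv ?_ ?_
  · intro π
    have : ((MulAut.conj σ).toEquiv π).partition = π.partition := by
      refine (Equiv.Perm.partition_eq_of_isConj.1 ?_).symm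
      rw [isConj_iff]
      exact ⟨σ, rfl⟩
    simp [conjClass] at this ⊢
    rw [this]
  · intro π _; rfl

theorem stmt8 (n : ℕ) (hn : 3 ≤ n) (lam : n.Partition)
    (p q r X₁ X₂ X₃ X₄ : ℚ)
    (hp : p = (lam.parts.count 1 : ℚ)) (hq : q = (lam.parts.count 2 : ℚ))
    (hr : r = (lam.parts.count 3 : ℚ))
    (hX1 : X₁ = p - 1) (hX2 : X₂ = (p - 1) * (p - 2) / 2 + q - 1)
    (hX3 : X₃ = (p - 1) * (p - 2) / 2 - q)
    (hX4 : X₄ = (p - 1) * (p - 2) * (p - 3) / 3 - p - r + 2) :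
    (∑ π ∈ conjClass n lam,
      ((((Finset.univ : Finset (Fin n × Fin n × Fin n)).filter fun x =>
          x.1 < x.2.1 ∧ x.2.1 < x.2.2 ∧ π x.2.1 < π x.1 ∧ π x.2.2 < π x.2.1).card : ℚ)))
    = ((conjClass n lam).card : ℚ) *
      ((n.choose 3 : ℚ) / 6 - ((n : ℚ) + 1) * ((n : ℚ) - 3) * X₁ / 30
        + ((n : ℚ) + 1) * X₂ / 30 - (2 * (n : ℚ) - 3) * X₃ / 30 + X₄ / 15) := by
  change ∑ π ∈ conjClass n lam, occ π = _
  have hf : (n.factorial : ℚ) ≠ 0 := by positivity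
  apply mul_left_cancel₀ hf
  have h1 : (n.factorial : ℚ) * ∑ π ∈ conjClass n lam, occ π
      = ∑ π ∈ conjClass n lam, ∑ σ : Perm (Fin n), occ (σ * π * σ⁻¹) := by
    rw [Finset.sum_comm, Finset.sum_congr rfl (fun σ _ => conj_sum_s8 lam σ)]
    simp [Fintype.card_perm]
  rw [h1, mul_left_comm, ← nsmul_eq_mul]
  refine Finset.sum_eq_card_nsmul fun π hπ => ?_
  have hπ' : (Equiv.Perm.partition π).parts = lam.parts := by
    simpa [conjClass] using hπ
  have e1 : fx π = p := by rw [fx_eq, hp, hπ']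
  have e2 : tw π = q * 2 := by rw [tw_eq, hq, hπ']
  have e3 : th π = r * 3 := by rw [th_eq, hr, hπ']
  have hc : (n.choose 3 : ℚ) = n * (n - 1) * (n - 2) / 6 := by
    obtain ⟨m, rfl⟩ := Nat.exists_eq_add_of_le hn
    have := Nat.choose_mul_factorial_mul_factorial (n := 3 + m) (k := 3) (by omega)
    have h2 : (3 + m).factorial = (m + 3) * ((m + 2) * ((m + 1) * m.factorial)) := by
      rw [add_comm]; simp [Nat.factorial_succ]
    rw [h2, Nat.add_sub_cancel_left] at this
    have hm : (m.factorial : ℚ) ≠ 0 := by positivity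
    have h3 : ((3 + m).choose 3 : ℚ) * 6 * m.factorial
        = (m + 3) * ((m + 2) * ((m + 1) * m.factorial)) := by
      exact_mod_cast this
    have h4 : ((3 + m).choose 3 : ℚ) * 6 = (m + 3) * (m + 2) * (m + 1) := by
      apply mul_right_cancel₀ hm; rw [h3]; ring
    push_cast
    linarith
  rw [sum_occ, T_poly, e1, e2, e3, hX1, hX2, hX3, hX4, hc]
  ring
end
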